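/- arXiv:2303.05348 — 3 statements merged into one kernel-verified Lean document; each statement's English description precedes it below -/
import Mathlib

section
/- Let μ ≥ 0. There exist constants c₁, c₂ > 0 such that for all r, s, t > 0, c₁ ≤ (2t)^{−1}(rs)^{−μ} e^{−(r²+s²)/(4t)} I_μ(rs/(2t)) / [ (1 ∧ rs/t)^{μ+1/2} (rs)^{−μ−1/2} t^{−1/2} e^{−(r−s)²/(4t)} ] ≤ c₂. -/
open MeasureTheory Set Real

/-- The modified Bessel function of the first kind `I_μ`, for positive real argument. -/
noncomputable def besselI (μ z : ℝ) : ℝ :=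
  (z / 2) ^ μ * ∑' k : ℕ, (z ^ 2 / 4) ^ k / (Nat.factorial k * Real.Gamma (k + μ + 1))

open Filter Topology in
lemma gammaSeq_eq (s : ℝ) (hs : 0 < s) (n : ℕ) :
    Real.GammaSeq s n = (n:ℝ) ^ s * (Nat.factorial n) * (Real.Gamma s / Real.Gamma (s + n + 1)) := by
  have key : ∀ n : ℕ, Real.Gamma (s + n) = (∏ j ∈ Finset.range n, (s + j)) * Real.Gamma s := by
    intro n
    induction n with
    | zero => simp
    | succ k ih =>
      rw [Finset.prod_range_succ, Nat.cast_succ, ← add_assoc, Real.Gamma_add_one (by positivity), ih]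
      ring
  have h := key (n+1)
  have hp : 0 < ∏ j ∈ Finset.range (n+1), (s + (j:ℝ)) :=
    Finset.prod_pos (fun j _ => by positivity)
  have hg := Real.Gamma_pos_of_pos hs
  rw [Nat.cast_succ, ← add_assoc] at h
  rw [h, Real.GammaSeq]
  field_simp

open Filter Topology in
lemma gamma_ratio_tendsto (μ : ℝ) (hμ : 0 ≤ μ) :
    Tendsto (fun k : ℕ => Real.Gamma (k + 1/2) * (2 * k + 1) ^ (μ + 1/2) / Real.Gamma (k + μ + 1))
      atTop (𝓝 (2 ^ (μ + 1/2))) := by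
  rw [← tendsto_add_atTop_iff_nat 1]
  have g1 := Real.Gamma_pos_of_pos (show 0 < μ + 1 by linarith)
  have g2 := Real.Gamma_pos_of_pos (show (0:ℝ) < 1/2 by norm_num)
  have h1 := Real.GammaSeq_tendsto_Gamma (μ + 1)
  have h2 := Real.GammaSeq_tendsto_Gamma (1/2)
  have h3 := ((h1.div h2 g2.ne').mul_const (Real.Gamma (1/2) / Real.Gamma (μ+1)))
  have h4 : Tendsto (fun n : ℕ => (2 + 3 * ((n:ℝ))⁻¹)) atTop (𝓝 (2 + 3 * 0)) :=
    (tendsto_inv_atTop_nhds_zero_nat.const_mul 3).const_add 2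
  have h5 := h4.rpow_const (p := μ + 1/2) (Or.inr (by linarith))
  have h6 := h3.mul h5
  have e : Real.Gamma (μ + 1) / Real.Gamma (1/2) * (Real.Gamma (1/2) / Real.Gamma (μ+1)) *
      (2 + 3 * 0) ^ (μ + 1/2) = 2 ^ (μ + 1/2) := by
    rw [show (2 + 3 * 0 : ℝ) = 2 by norm_num]; field_simp
  rw [e] at h6
  refine h6.congr' ?_
  filter_upwards [eventually_gt_atTop 0] with n hn
  have hn' : (0:ℝ) < n := by exact_mod_cast hn
  simp only [Pi.div_apply]
  rw [gammaSeq_eq _ (by linarith), gammaSeq_eq _ (by norm_num)]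
  have e1 : (n:ℝ) ^ (μ + 1) = (n:ℝ) ^ (μ + 1/2) * (n:ℝ) ^ (1/2 : ℝ) := by
    rw [← Real.rpow_add hn']; congr 1; ring
  have e2 : (2 * ((n + 1 : ℕ) : ℝ) + 1) ^ (μ + 1/2)
      = (n:ℝ) ^ (μ + 1/2) * (2 + 3 * ((n:ℝ))⁻¹) ^ (μ + 1/2) := by
    rw [← Real.mul_rpow (by positivity) (by positivity)]; congr 1; push_cast; field_simp; ring
  rw [e1, e2]
  rw [show (((n + 1 : ℕ) : ℝ) + 1/2) = 1/2 + n + 1 by push_cast; ring,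
    show (((n + 1 : ℕ) : ℝ) + μ + 1) = μ + 1 + n + 1 by push_cast; ring]
  have g3 := Real.Gamma_pos_of_pos (show 0 < μ + 1 + n + 1 by linarith)
  have g4 := Real.Gamma_pos_of_pos (show (0:ℝ) < 1/2 + n + 1 by linarith)
  generalize Real.Gamma (μ + 1 + n + 1) = A at *
  generalize Real.Gamma (1/2 + n + 1) = B at *
  generalize Real.Gamma (μ + 1) = A' at *
  generalize Real.Gamma (1/2) = B' at *
  have p1 : (n:ℝ) ^ (1/2 : ℝ) ≠ 0 := by positivity
  have p2 : ((Nat.factorial n : ℕ) : ℝ) ≠ 0 := by positivity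
  generalize (n:ℝ) ^ (1/2 : ℝ) = X at *
  generalize (n:ℝ) ^ (μ + 1/2 : ℝ) = Y at *
  generalize ((Nat.factorial n : ℕ) : ℝ) = F at *
  field_simp

open Filter Topology in
lemma gamma_ratio_bdd (μ : ℝ) (hμ : 0 ≤ μ) :
    ∃ c C : ℝ, 0 < c ∧ 0 < C ∧ ∀ k : ℕ,
      c ≤ Real.Gamma (k + 1/2) * (2 * k + 1) ^ (μ + 1/2) / Real.Gamma (k + μ + 1) ∧
      Real.Gamma (k + 1/2) * (2 * k + 1) ^ (μ + 1/2) / Real.Gamma (k + μ + 1) ≤ C := by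
  have h := gamma_ratio_tendsto μ hμ
  have hpos : ∀ k : ℕ, 0 <
      Real.Gamma (k + 1/2) * (2 * k + 1) ^ (μ + 1/2) / Real.Gamma (k + μ + 1) := by
    intro k
    have g3 := Real.Gamma_pos_of_pos (show 0 < (k:ℝ) + μ + 1 by positivity)
    have g4 := Real.Gamma_pos_of_pos (show (0:ℝ) < (k:ℝ) + 1/2 by positivity)
    positivity
  obtain ⟨C, hC⟩ := h.bddAbove_range
  obtain ⟨D, hD⟩ := (h.inv₀ (by positivity)).bddAbove_range
  have hC' := fun k => hC (Set.mem_range_self k)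
  have hD' := fun k => hD (Set.mem_range_self k)
  have D0 : 0 < D := lt_of_lt_of_le (inv_pos.mpr (hpos 0)) (hD' 0)
  refine ⟨D⁻¹, C, inv_pos.mpr D0, lt_of_lt_of_le (hpos 0) (hC' 0), fun k => ⟨?_, hC' k⟩⟩
  exact inv_le_of_inv_le₀ (hpos k) (hD' k)

lemma term_eq (μ z : ℝ) (hμ : 0 ≤ μ) (k : ℕ) :
    (z ^ 2 / 4) ^ k / (Nat.factorial k * Real.Gamma (k + μ + 1)) =
    (√Real.pi)⁻¹ * (Real.Gamma (k + 1/2) * (2 * k + 1) ^ (μ + 1/2) / Real.Gamma (k + μ + 1)) *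
      (z ^ (2 * k) / (Nat.factorial (2 * k) : ℝ) * (2 * k + 1) ^ (-(μ + 1/2))) := by
  have h := Real.Gamma_mul_Gamma_add_half ((k:ℝ) + 1/2)
  rw [show (k:ℝ) + 1/2 + 1/2 = k + 1 by ring, Real.Gamma_nat_eq_factorial,
    show 2 * ((k:ℝ) + 1/2) = (2 * k : ℕ) + 1 by push_cast; ring, Real.Gamma_nat_eq_factorial,
    show (1 - (((2 * k : ℕ) : ℝ) + 1)) = -((2 * k : ℕ) : ℝ) by ring,
    Real.rpow_neg (by norm_num), Real.rpow_natCast, pow_mul] at h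
  have g3 := Real.Gamma_pos_of_pos (show 0 < (k:ℝ) + μ + 1 by positivity)
  have hx : (0:ℝ) < 2 * k + 1 := by positivity
  rw [Real.rpow_neg hx.le]
  have hxp : (0:ℝ) < (2 * k + 1 : ℝ) ^ (μ + 1/2) := by positivity
  have p2 : (0:ℝ) < (Nat.factorial k : ℝ) := by positivity
  have p3 : (0:ℝ) < (Nat.factorial (2 * k) : ℝ) := by positivity
  have hG : Real.Gamma (k + 1/2) = (Nat.factorial (2 * k) : ℝ) * (4 ^ k)⁻¹ * √Real.pi / Nat.factorial k := by
    rw [eq_div_iff p2.ne', h]; norm_num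
  rw [hG, div_pow, pow_mul]
  have : 0 < √Real.pi := by positivity
  field_simp

lemma sum_moment (z : ℝ) :
    HasSum (fun k : ℕ => z ^ (2 * k) / (Nat.factorial (2 * k) : ℝ) * (2 * k + 1))
      (Real.cosh z + z * Real.sinh z) := by
  have h1 := Real.hasSum_cosh z
  have h2 := (Real.hasSum_sinh z).mul_left z
  have h3 : HasSum (fun k : ℕ => z ^ (2 * k) / (Nat.factorial (2 * k) : ℝ) * (2 * k))
      (z * Real.sinh z) := by
    rw [← hasSum_nat_add_iff' 1]
    simp only [Finset.range_one, Finset.sum_singleton, Nat.cast_zero, mul_zero, sub_zero]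
    refine h2.congr_fun ?_ |> id
    intro k
    rw [show 2 * (k + 1) = (2 * k + 1) + 1 by ring, Nat.factorial_succ]
    push_cast
    field_simp
    ring
  refine (h1.add h3).congr_fun ?_ |> id
  intro k; ring

lemma weight_upper (z : ℝ) (hz : 0 < z) (m : ℕ) :
    (Summable fun k : ℕ => z ^ (2 * k) / (Nat.factorial (2 * k) : ℝ) * ((2 * k + 1 : ℝ) ^ m)⁻¹) ∧
    (max 1 (2 * z)) ^ m * ∑' k : ℕ, z ^ (2 * k) / (Nat.factorial (2 * k) : ℝ) * ((2 * k + 1 : ℝ) ^ m)⁻¹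
      ≤ Nat.factorial m * 2 ^ m * Real.exp z := by
  have h1 := Real.hasSum_cosh z
  have hle : ∀ k : ℕ, z ^ (2 * k) / (Nat.factorial (2 * k) : ℝ) * ((2 * k + 1 : ℝ) ^ m)⁻¹
      ≤ z ^ (2 * k) / (Nat.factorial (2 * k) : ℝ) := fun k =>
    mul_le_of_le_one_right (by positivity)
      (inv_le_one_of_one_le₀ (one_le_pow₀ (by linarith [Nat.cast_nonneg (α := ℝ) k])))
  have hs : Summable fun k : ℕ => z ^ (2 * k) / (Nat.factorial (2 * k) : ℝ) * ((2 * k + 1 : ℝ) ^ m)⁻¹ :=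
    Summable.of_nonneg_of_le (fun k => by positivity) hle h1.summable
  refine ⟨hs, ?_⟩
  have hce : Real.cosh z ≤ Real.exp z := by
    rw [Real.cosh_eq]; linarith [Real.exp_le_exp.mpr (show -z ≤ z by linarith)]
  have f1 : (1:ℝ) ≤ Nat.factorial m := by exact_mod_cast Nat.one_le_iff_ne_zero.mpr (Nat.factorial_ne_zero m)
  rcases le_total (2 * z) 1 with h | h
  · rw [max_eq_left h, one_pow, one_mul]
    have := (hs.tsum_le_tsum hle h1.summable).trans (h1.tsum_eq.le.trans hce)
    refine this.trans (le_mul_of_one_le_left (Real.exp_pos z).le ?_)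
    exact one_le_mul_of_one_le_of_one_le f1 (one_le_pow₀ (by norm_num))
  · rw [max_eq_right h, mul_pow, mul_assoc, ← tsum_mul_left]
    have he : HasSum (fun n : ℕ => z ^ n / (Nat.factorial n : ℝ)) (Real.exp z) := by
      rw [Real.exp_eq_exp_ℝ]; exact NormedSpace.expSeries_div_hasSum_exp z
    have hinj : Function.Injective (fun k : ℕ => 2 * k + m) := fun a b hab => by
      simp only at hab; omega
    have h2 := tsum_comp_le_tsum_of_inj he.summable (fun n => by positivity) hinj
    have hs2 := he.summable.comp_injective hinj
    rw [he.tsum_eq] at h2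
    have h3 : ∑' k : ℕ, z ^ m * (z ^ (2 * k) / (Nat.factorial (2 * k) : ℝ) * ((2 * k + 1 : ℝ) ^ m)⁻¹)
        ≤ ∑' k : ℕ, (Nat.factorial m : ℝ) * ((fun n : ℕ => z ^ n / (Nat.factorial n : ℝ)) ∘ (fun k : ℕ => 2 * k + m)) k := by
      refine (hs.mul_left _).tsum_le_tsum (fun k => ?_) (hs2.mul_left _)
      simp only [Function.comp]
      have hf : (Nat.factorial (2 * k + m) : ℝ) ≤
          Nat.factorial (2 * k) * (Nat.factorial m * (2 * k + 1 : ℝ) ^ m) := by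
        have := Nat.ascFactorial_le_factorial_mul_pow (2 * k + 1) m
        have e := Nat.factorial_mul_ascFactorial (2 * k) m
        rw [← e]
        push_cast
        gcongr
        exact_mod_cast this
      rw [← mul_div_assoc, ← div_eq_mul_inv, div_div, ← mul_div_assoc, div_le_div_iff₀ (by positivity) (by positivity)]
      calc _ ≤ z ^ m * z ^ (2 * k) * (Nat.factorial (2 * k) * (Nat.factorial m * (2 * k + 1 : ℝ) ^ m)) := by gcongr
        _ = _ := by ring
    rw [tsum_mul_left (a := (Nat.factorial m : ℝ))] at h3
    calc _ ≤ 2 ^ m * ((Nat.factorial m : ℝ) * Real.exp z) := by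
          gcongr
          refine h3.trans ?_
          gcongr
      _ = _ := by ring

/-- two-sided bound of the weighted sum -/
lemma weight_bounds (ν : ℝ) (hν : 0 ≤ ν) : ∃ c C : ℝ, 0 < c ∧ 0 < C ∧ ∀ z : ℝ, 0 < z →
    (Summable fun k : ℕ => z ^ (2 * k) / (Nat.factorial (2 * k) : ℝ) * (2 * k + 1 : ℝ) ^ (-ν)) ∧
    c * ((max 1 (2 * z)) ^ (-ν) * Real.exp z) ≤
      ∑' k : ℕ, z ^ (2 * k) / (Nat.factorial (2 * k) : ℝ) * (2 * k + 1 : ℝ) ^ (-ν) ∧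
    ∑' k : ℕ, z ^ (2 * k) / (Nat.factorial (2 * k) : ℝ) * (2 * k + 1 : ℝ) ^ (-ν) ≤
      C * ((max 1 (2 * z)) ^ (-ν) * Real.exp z) := by
  obtain ⟨m, hm⟩ := exists_nat_ge ν
  refine ⟨4 ^ (-ν) / 4, 1 + Nat.factorial m * 2 ^ m, by positivity, by positivity, fun z hz => ?_⟩
  have h1 := Real.hasSum_cosh z
  obtain ⟨hs, hu⟩ := weight_upper z hz m
  set a := max 1 (2 * z) with ha
  have a1 : 1 ≤ a := le_max_left _ _
  have az : 2 * z ≤ a := le_max_right _ _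
  have a0 : 0 < a := by linarith
  have hce : Real.cosh z ≤ Real.exp z := by
    rw [Real.cosh_eq]; linarith [Real.exp_le_exp.mpr (show -z ≤ z by linarith)]
  have hce2 : Real.exp z / 2 ≤ Real.cosh z := by
    rw [Real.cosh_eq]; linarith [Real.exp_pos (-z)]
  have x1 : ∀ k : ℕ, (1:ℝ) ≤ 2 * k + 1 := fun k => by linarith [Nat.cast_nonneg (α := ℝ) k]
  have up : ∀ x : ℝ, 1 ≤ x → x ^ (-ν) ≤ a ^ (-ν) + a ^ (-ν) * (a ^ m * (x ^ m)⁻¹) := by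
    intro x hx
    have hx0 : 0 < x := by linarith
    rcases le_total a x with h | h
    · have := Real.rpow_le_rpow_of_nonpos a0 h (neg_nonpos.mpr hν)
      have : 0 ≤ a ^ (-ν) * (a ^ m * (x ^ m)⁻¹) := by positivity
      linarith
    · have e1 : x ^ (-ν) = x ^ ((m:ℝ) - ν) * (x ^ m)⁻¹ := by
        rw [Real.rpow_sub hx0, Real.rpow_natCast, Real.rpow_neg hx0.le]
        field_simp
      have e2 : a ^ (-ν) * a ^ m = a ^ ((m:ℝ) - ν) := by
        rw [← Real.rpow_natCast, ← Real.rpow_add a0]; congr 1; ring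
      have : x ^ ((m:ℝ) - ν) ≤ a ^ ((m:ℝ) - ν) := Real.rpow_le_rpow hx0.le h (by linarith)
      rw [← mul_assoc, e2, e1]
      have h3 := mul_le_mul_of_nonneg_right this (by positivity : 0 ≤ (x ^ m)⁻¹)
      have : 0 ≤ a ^ (-ν) := by positivity
      linarith
  have lo : ∀ x : ℝ, 1 ≤ x → (4 * a) ^ (-ν) - (4 * a) ^ (-ν) / (4 * a) * x ≤ x ^ (-ν) := by
    intro x hx
    have hx0 : 0 < x := by linarith
    have hp : 0 ≤ (4 * a) ^ (-ν) := by positivity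
    rcases le_total x (4 * a) with h | h
    · have := Real.rpow_le_rpow_of_nonpos hx0 h (neg_nonpos.mpr hν)
      have : 0 ≤ (4 * a) ^ (-ν) / (4 * a) * x := by positivity
      linarith
    · have h3 : (4 * a) ^ (-ν) ≤ (4 * a) ^ (-ν) / (4 * a) * x := by
        rw [div_mul_eq_mul_div, le_div_iff₀ (by positivity)]
        gcongr
      have : 0 ≤ x ^ (-ν) := by positivity
      linarith
  have hS : Summable fun k : ℕ => z ^ (2 * k) / (Nat.factorial (2 * k) : ℝ) * (2 * k + 1 : ℝ) ^ (-ν) := by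
    refine Summable.of_nonneg_of_le (fun k => by positivity) (fun k => ?_) h1.summable
    exact mul_le_of_le_one_right (by positivity)
      (Real.rpow_le_one_of_one_le_of_nonpos (x1 k) (neg_nonpos.mpr hν))
  refine ⟨hS, ?_, ?_⟩
  · have hl := (h1.mul_left ((4 * a) ^ (-ν))).sub
      ((sum_moment z).mul_left ((4 * a) ^ (-ν) / (4 * a)))
    have h2 := hasSum_le (fun k => ?_) hl hS.hasSum
    · refine le_trans ?_ h2
      have hsc : Real.sinh z ≤ Real.cosh z := (Real.sinh_lt_cosh z).le
      have hc0 := Real.cosh_pos z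
      have h5 : Real.cosh z + z * Real.sinh z ≤ 2 * a * Real.cosh z := by nlinarith
      have h6 : (4 * a) ^ (-ν) / (4 * a) * (Real.cosh z + z * Real.sinh z) ≤
          (4 * a) ^ (-ν) / (4 * a) * (2 * a * Real.cosh z) := by gcongr
      have h7 : (4 * a) ^ (-ν) / (4 * a) * (2 * a * Real.cosh z) =
          (4 * a) ^ (-ν) * Real.cosh z / 2 := by field_simp; ring
      have h8 : (4 * a) ^ (-ν) = 4 ^ (-ν) * a ^ (-ν) := Real.mul_rpow (by norm_num) a0.le
      have h9 : (4 * a) ^ (-ν) * (Real.exp z / 2) ≤ (4 * a) ^ (-ν) * Real.cosh z := by gcongr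
      have h10 : 4 ^ (-ν) / 4 * (a ^ (-ν) * Real.exp z) = (4 * a) ^ (-ν) * (Real.exp z / 2) / 2 := by
        rw [h8]; ring
      rw [h10]
      linarith
    · have := mul_le_mul_of_nonneg_left (lo _ (x1 k))
        (by positivity : 0 ≤ z ^ (2 * k) / (Nat.factorial (2 * k) : ℝ))
      refine le_trans (le_of_eq ?_) this
      ring
  · have hl := (h1.mul_left (a ^ (-ν))).add (hs.hasSum.mul_left (a ^ (-ν) * a ^ m))
    have h2 := hasSum_le (fun k => ?_) hS.hasSum hl
    · refine h2.trans ?_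
      have p : 0 ≤ a ^ (-ν) := by positivity
      have h3 := mul_le_mul_of_nonneg_left hu p
      have h4 := mul_le_mul_of_nonneg_left hce p
      rw [mul_assoc]
      refine (add_le_add h4 h3).trans (le_of_eq ?_)
      ring
    · have := mul_le_mul_of_nonneg_left (up _ (x1 k))
        (by positivity : 0 ≤ z ^ (2 * k) / (Nat.factorial (2 * k) : ℝ))
      refine le_trans this (le_of_eq ?_)
      ring

lemma series_bounds (μ : ℝ) (hμ : 0 ≤ μ) : ∃ c C : ℝ, 0 < c ∧ 0 < C ∧ ∀ z : ℝ, 0 < z →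
    c * ((max 1 (2 * z)) ^ (-(μ + 1/2)) * Real.exp z) ≤
      ∑' k : ℕ, (z ^ 2 / 4) ^ k / (Nat.factorial k * Real.Gamma (k + μ + 1)) ∧
    ∑' k : ℕ, (z ^ 2 / 4) ^ k / (Nat.factorial k * Real.Gamma (k + μ + 1)) ≤
      C * ((max 1 (2 * z)) ^ (-(μ + 1/2)) * Real.exp z) := by
  obtain ⟨c, C, hc, hC, h⟩ := weight_bounds (μ + 1/2) (by linarith)
  obtain ⟨d, D, hd, hD, g⟩ := gamma_ratio_bdd μ hμ
  have hpi : 0 < (√Real.pi)⁻¹ := by positivity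
  refine ⟨(√Real.pi)⁻¹ * d * c, (√Real.pi)⁻¹ * D * C, by positivity, by positivity, fun z hz => ?_⟩
  obtain ⟨hs, h1, h2⟩ := h z hz
  simp only [term_eq μ z hμ]
  have w0 : ∀ k : ℕ, 0 ≤ z ^ (2 * k) / (Nat.factorial (2 * k) : ℝ) * (2 * k + 1 : ℝ) ^ (-(μ + 1/2)) :=
    fun k => by positivity
  have lo := fun k : ℕ => mul_le_mul_of_nonneg_right
    (mul_le_mul_of_nonneg_left (g k).1 hpi.le) (w0 k)
  have up := fun k : ℕ => mul_le_mul_of_nonneg_right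
    (mul_le_mul_of_nonneg_left (g k).2 hpi.le) (w0 k)
  have hS := Summable.of_nonneg_of_le
    (fun k => le_trans (mul_nonneg (by positivity) (w0 k)) (lo k)) up (hs.mul_left _)
  constructor
  · have := (hs.mul_left ((√Real.pi)⁻¹ * d)).tsum_le_tsum lo hS
    refine le_trans ?_ this
    rw [tsum_mul_left, mul_assoc _ c]
    exact mul_le_mul_of_nonneg_left h1 (by positivity)
  · have := hS.tsum_le_tsum up (hs.mul_left ((√Real.pi)⁻¹ * D))
    refine le_trans this ?_
    rw [tsum_mul_left, mul_assoc _ C]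
    exact mul_le_mul_of_nonneg_left h2 (by positivity)

/-- Two-sided bound for the one-dimensional Bessel heat kernel: for `μ ≥ 0`
there are `c₁, c₂ > 0` such that for all `r, s, t > 0`,
`(2t)⁻¹ (rs)^{-μ} e^{-(r²+s²)/(4t)} I_μ(rs/(2t))` is comparable to
`(1 ∧ rs/t)^{μ+1/2} (rs)^{-μ-1/2} t^{-1/2} e^{-(r-s)²/(4t)}`. -/
theorem stmt_13 (μ : ℝ) (hμ : 0 ≤ μ) :
    ∃ c₁ c₂ : ℝ, 0 < c₁ ∧ 0 < c₂ ∧ ∀ r s t : ℝ, 0 < r → 0 < s → 0 < t →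
      c₁ * ((min 1 (r * s / t)) ^ (μ + 1/2) * (r * s) ^ (-(μ + 1/2)) * t ^ (-(1:ℝ)/2)
            * Real.exp (-(r - s) ^ 2 / (4 * t)))
        ≤ (2 * t)⁻¹ * (r * s) ^ (-μ) * Real.exp (-(r ^ 2 + s ^ 2) / (4 * t))
            * besselI μ (r * s / (2 * t))
      ∧ (2 * t)⁻¹ * (r * s) ^ (-μ) * Real.exp (-(r ^ 2 + s ^ 2) / (4 * t))
            * besselI μ (r * s / (2 * t))
        ≤ c₂ * ((min 1 (r * s / t)) ^ (μ + 1/2) * (r * s) ^ (-(μ + 1/2)) * t ^ (-(1:ℝ)/2)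
            * Real.exp (-(r - s) ^ 2 / (4 * t))) := by
  obtain ⟨c, C, hc, hC, h⟩ := series_bounds μ hμ
  refine ⟨2⁻¹ * 4 ^ (-μ) * c, 2⁻¹ * 4 ^ (-μ) * C, by positivity, by positivity, ?_⟩
  intro r s t hr hs ht
  have hp : 0 < r * s := by positivity
  have hz : 0 < r * s / (2 * t) := by positivity
  obtain ⟨h1, h2⟩ := h _ hz
  rw [besselI]
  set S := ∑' k : ℕ, ((r * s / (2 * t)) ^ 2 / 4) ^ k / (Nat.factorial k * Real.Gamma (k + μ + 1))
  set E := Real.exp (-(r - s) ^ 2 / (4 * t)) with hE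
  have e2z : 2 * (r * s / (2 * t)) = r * s / t := by field_simp
  rw [e2z] at h1 h2
  set a := max 1 (r * s / t) with ha
  have a0 : 0 < a := lt_of_lt_of_le one_pos (le_max_left _ _)
  have hmin : min 1 (r * s / t) = (r * s) * (a⁻¹ * t⁻¹) := by
    have hmm : min 1 (r * s / t) * a = 1 * (r * s / t) := min_mul_max _ _
    have : min 1 (r * s / t) = (r * s / t) / a := by rw [eq_div_iff a0.ne', hmm, one_mul]
    rw [this]; field_simp
  have hR : (min 1 (r * s / t)) ^ (μ + 1/2) * (r * s) ^ (-(μ + 1/2)) * t ^ (-(1:ℝ)/2) * E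
      = t⁻¹ * t ^ (-μ) * a ^ (-(μ + 1/2)) * E := by
    rw [hmin, Real.mul_rpow hp.le (by positivity), Real.mul_rpow (x := a⁻¹) (by positivity) (by positivity),
      Real.inv_rpow a0.le, Real.inv_rpow ht.le, ← Real.rpow_neg a0.le, ← Real.rpow_neg ht.le,
      Real.rpow_neg hp.le (μ + 1/2)]
    have e : t⁻¹ * t ^ (-μ) = t ^ (-(μ + 1/2)) * t ^ (-(1:ℝ)/2) := by
      rw [← Real.rpow_neg_one, ← Real.rpow_add ht, ← Real.rpow_add ht]; congr 1; ring
    rw [e]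
    have : (r * s) ^ (μ + 1/2) ≠ 0 := by positivity
    field_simp
  have hexp : Real.exp (-(r ^ 2 + s ^ 2) / (4 * t)) = E * Real.exp (-(r * s / (2 * t))) := by
    rw [hE, ← Real.exp_add]; congr 1; field_simp; ring
  have hL : (2 * t)⁻¹ * (r * s) ^ (-μ) * Real.exp (-(r ^ 2 + s ^ 2) / (4 * t))
            * ((r * s / (2 * t) / 2) ^ μ * S)
      = (2⁻¹ * 4 ^ (-μ) * (t⁻¹ * t ^ (-μ) * E)) * (Real.exp (-(r * s / (2 * t))) * S) := by
    rw [hexp, show r * s / (2 * t) / 2 = (r * s) * (4⁻¹ * t⁻¹) by field_simp; norm_num,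
      Real.mul_rpow hp.le (by positivity), Real.mul_rpow (x := 4⁻¹) (by positivity) (by positivity),
      Real.inv_rpow ht.le, Real.inv_rpow (by norm_num), ← Real.rpow_neg ht.le,
      ← Real.rpow_neg (by norm_num), Real.rpow_neg hp.le, mul_inv]
    have : (r * s) ^ μ ≠ 0 := by positivity
    field_simp
  rw [hR, hL]
  have E0 : 0 < E := Real.exp_pos _
  have K0 : 0 ≤ 2⁻¹ * 4 ^ (-μ) * (t⁻¹ * t ^ (-μ) * E) := by positivity
  have hee : Real.exp (-(r * s / (2 * t))) * Real.exp (r * s / (2 * t)) = 1 := by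
    rw [← Real.exp_add]; simp
  have x0 := (Real.exp_pos (-(r * s / (2 * t)))).le
  have q1 := mul_le_mul_of_nonneg_left (mul_le_mul_of_nonneg_left h1 x0) K0
  have q2 := mul_le_mul_of_nonneg_left (mul_le_mul_of_nonneg_left h2 x0) K0
  constructor
  · refine le_trans (le_of_eq ?_) q1
    linear_combination (-(2⁻¹ * 4 ^ (-μ) * (t⁻¹ * t ^ (-μ) * E)) * c * a ^ (-(μ + 1/2))) * hee
  · refine le_trans q2 (le_of_eq ?_)
    linear_combination ((2⁻¹ * 4 ^ (-μ) * (t⁻¹ * t ^ (-μ) * E)) * C * a ^ (-(μ + 1/2))) * hee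
end

section
/- Let d ≥ 1, α ∈ (0,2), p ∈ ((α−1)/2, α), and s ∈ (0, min{(1+2p)/α, 2d/α}). Define the kernel G(x,y) on ℝ₊^d × ℝ₊^d by G(x,y) = |x−y|^{αs/2 − d} (1 ∧ x_d/|x−y| ∧ y_d/|x−y|)^p for |x−y| ≤ max{x_d, y_d}, and by G(x,y) = |x−y|^{αs/2−d} (x_d y_d / |x−y|²)^p · [1 + (|x−y|/max{x_d,y_d})^{max{0, 2p − α(1+s/2)}} + 1_{p = α(1+s/2)/2} ln(|x−y|/max{x_d,y_d})] for max{x_d,y_d} ≤ |x−y|. Then the integral operator with kernel x_d^{−αs/2} G(x,y) is bounded on L²(ℝ₊^d). -/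
open MeasureTheory Set ENNReal

/-- The last (vertical) coordinate of a point in `ℝ^d`. -/
def lastCoord (d : ℕ) (hd : 1 ≤ d) (x : EuclideanSpace ℝ (Fin d)) : ℝ :=
  x ⟨d - 1, by omega⟩

/-- Two-sided Riesz kernel bound function for the Hardy operator on the half-space. -/
noncomputable def rieszBound (d : ℕ) (hd : 1 ≤ d) (α p s : ℝ)
    (x y : EuclideanSpace ℝ (Fin d)) : ℝ :=
  if dist x y ≤ max (lastCoord d hd x) (lastCoord d hd y) then
    dist x y ^ (α * s / 2 - d) *
      (min 1 (min (lastCoord d hd x / dist x y) (lastCoord d hd y / dist x y))) ^ p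
  else
    dist x y ^ (α * s / 2 - d) *
      (lastCoord d hd x * lastCoord d hd y / dist x y ^ 2) ^ p *
      (1 + (dist x y / max (lastCoord d hd x) (lastCoord d hd y))
              ^ (max 0 (2 * p - α * (1 + s / 2)))
         + (if p = α * (1 + s / 2) / 2 then
              Real.log (dist x y / max (lastCoord d hd x) (lastCoord d hd y))
            else 0))

lemma aux_int0 (v a : ℝ) (hv : 0 < v) (ha : -1 < a) :
    ∫⁻ u in Ioc 0 v, ENNReal.ofReal (u ^ a) = ENNReal.ofReal (v ^ (a+1) / (a+1)) := by
  rw [← ofReal_integral_eq_lintegral_ofReal]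
  · congr 1
    rw [← intervalIntegral.integral_of_le hv.le, integral_rpow (Or.inl ha), Real.zero_rpow (by linarith)]
    simp
  · exact (intervalIntegrable_iff_integrableOn_Ioc_of_le hv.le).1 (intervalIntegral.intervalIntegrable_rpow' ha)
  · filter_upwards [ae_restrict_mem measurableSet_Ioc] with u hu
    exact Real.rpow_nonneg hu.1.le _

lemma aux_int1 (v a : ℝ) (hv : 0 < v) (ha : a < -1) :
    ∫⁻ u in Ioi v, ENNReal.ofReal (u ^ a) = ENNReal.ofReal (v ^ (a+1) / (-(a+1))) := by
  rw [← ofReal_integral_eq_lintegral_ofReal]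
  · congr 1
    rw [integral_Ioi_rpow_of_lt ha hv, div_neg, neg_div]
  · exact integrableOn_Ioi_rpow_of_lt ha hv
  · filter_upwards [ae_restrict_mem measurableSet_Ioi] with u hu
    exact Real.rpow_nonneg (hv.trans hu).le _

lemma aux_abs (F : ℝ → ℝ≥0∞) (c : ℝ) :
    ∫⁻ t : ℝ, F |c - t| = 2 * ∫⁻ t in Ioi 0, F t := by
  rw [lintegral_sub_left_eq_self (fun t => F |t|) c]
  rw [← lintegral_add_compl _ (measurableSet_Ioi (a := (0:ℝ))), two_mul]
  congr 1
  · refine setLIntegral_congr_fun measurableSet_Ioi fun t ht => ?_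
    simp only [abs_of_pos (show (0:ℝ) < t from ht)]
  · rw [compl_Ioi, ← setLIntegral_congr Iio_ae_eq_Iic]
    have h := (Measure.measurePreserving_neg (volume : Measure ℝ)).setLIntegral_comp_preimage_emb (MeasurableEquiv.neg ℝ).measurableEmbedding (fun t => F |t|) (Ioi 0)
    simp at h
    rw [h]
    refine setLIntegral_congr_fun measurableSet_Ioi fun t ht => ?_
    simp only [abs_of_pos (show (0:ℝ) < t from ht)]

/-- Profile in each tangential direction. -/
noncomputable def phi (η v t : ℝ) : ℝ :=
  if t ≤ v then t ^ (η - 1) * v ^ (-η) else t ^ (-1 - η) * v ^ η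

lemma phi_meas (η v : ℝ) : Measurable (phi η v) := by
  unfold phi
  exact Measurable.ite measurableSet_Iic (by fun_prop) (by fun_prop)

lemma phi_nonneg (η v t : ℝ) (hv : 0 < v) (ht : 0 ≤ t) : 0 ≤ phi η v t := by
  unfold phi; split_ifs <;> positivity

lemma phi_int (η v c : ℝ) (hη : 0 < η) (hv : 0 < v) :
    ∫⁻ t : ℝ, ENNReal.ofReal (phi η v |c - t|) ≤ ENNReal.ofReal (4 / η) := by
  rw [aux_abs (fun t => ENNReal.ofReal (phi η v t)), ← Ioc_union_Ioi_eq_Ioi hv.le,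
    lintegral_union measurableSet_Ioi (by
      rw [Set.disjoint_left]; intro a h1 h2; exact absurd h1.2 (not_le.2 h2))]
  have h1 : ∫⁻ t in Ioc 0 v, ENNReal.ofReal (phi η v t) = ENNReal.ofReal (1/η) := by
    rw [setLIntegral_congr_fun (g := fun t => ENNReal.ofReal (t ^ (η-1)) * ENNReal.ofReal (v ^ (-η))) measurableSet_Ioc, lintegral_mul_const' _ _ ofReal_ne_top, aux_int0 v _ hv (by linarith), ← ENNReal.ofReal_mul]
    · congr 1
      rw [show η - 1 + 1 = η by ring, Real.rpow_neg hv.le]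
      have := Real.rpow_pos_of_pos hv η
      field_simp
    · rw [show η - 1 + 1 = η by ring]; positivity
    · intro t ht
      have := ht.1
      simp only [phi, if_pos ht.2]
      rw [ENNReal.ofReal_mul (by positivity)]
  have h2 : ∫⁻ t in Ioi v, ENNReal.ofReal (phi η v t) = ENNReal.ofReal (1/η) := by
    rw [setLIntegral_congr_fun (g := fun t => ENNReal.ofReal (t ^ (-1-η)) * ENNReal.ofReal (v ^ (η))) measurableSet_Ioi, lintegral_mul_const' _ _ ofReal_ne_top, aux_int1 v _ hv (by linarith), ← ENNReal.ofReal_mul]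
    · congr 1
      rw [show -1 - η + 1 = -η by ring, Real.rpow_neg hv.le]
      have := Real.rpow_pos_of_pos hv η
      field_simp
      try ring
    · rw [show -1 - η + 1 = -η by ring, neg_neg]; positivity
    · intro t ht
      have : 0 < t := hv.trans ht
      simp only [phi, if_neg (not_le.2 (show v < t from ht))]
      rw [ENNReal.ofReal_mul (by positivity)]
  rw [h1, h2, ← ENNReal.ofReal_add (by positivity) (by positivity), show (2:ℝ≥0∞) = ENNReal.ofReal 2 by simp, ← ENNReal.ofReal_mul (by norm_num)]
  apply le_of_eq; congr 1; ring

lemma phi_exp1 {η v t : ℝ} (hv : 0 < v) (ht : 0 < t) (h : t ≤ v) :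
    phi η v t = Real.exp (-Real.log t - η * (Real.log v - Real.log t)) := by
  rw [phi, if_pos h, Real.rpow_def_of_pos ht, Real.rpow_def_of_pos hv, ← Real.exp_add]
  congr 1; ring

lemma phi_exp2 {η v t : ℝ} (hv : 0 < v) (ht : 0 < t) (h : v ≤ t) :
    phi η v t = Real.exp (-Real.log t - η * (Real.log t - Real.log v)) := by
  rcases h.eq_or_lt with h | h
  · rw [phi_exp1 hv ht h.ge, h]
  rw [phi, if_neg (not_le.2 h), Real.rpow_def_of_pos ht, Real.rpow_def_of_pos hv, ← Real.exp_add]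
  congr 1; ring

lemma phi_anti {η v t r : ℝ} (hη : 0 < η) (hη1 : η < 1) (hv : 0 < v) (ht : 0 < t) (h : t ≤ r) :
    phi η v r ≤ phi η v t := by
  have hr := ht.trans_le h
  have hl := Real.log_le_log ht h
  rcases le_total r v with h1 | h1
  · rw [phi_exp1 hv hr h1, phi_exp1 hv ht (h.trans h1)]
    apply Real.exp_le_exp.2; nlinarith
  · have := Real.log_le_log hv h1
    rw [phi_exp2 hv hr h1]
    rcases le_total t v with h2 | h2
    · have := Real.log_le_log ht h2
      rw [phi_exp1 hv ht h2]
      apply Real.exp_le_exp.2; nlinarith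
    · rw [phi_exp2 hv ht h2]
      apply Real.exp_le_exp.2; nlinarith

lemma lintegral_pi_prod (n : ℕ) (f : Fin n → ℝ → ℝ≥0∞) (hf : ∀ i, Measurable (f i)) :
    ∫⁻ x : Fin n → ℝ, ∏ i, f i (x i) = ∏ i, ∫⁻ t, f i t := by
  induction n with
  | zero => simp [volume_pi]
  | succ n ih =>
    have h := (volume_preserving_piFinSuccAbove (fun _ : Fin (n+1) => ℝ) 0).symm
    rw [← h.lintegral_comp_emb (MeasurableEquiv.measurableEmbedding _)]
    simp only [MeasurableEquiv.piFinSuccAbove_symm_apply, Fin.insertNthEquiv, Fin.prod_univ_succ,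
      Fin.insertNth_zero, Equiv.coe_fn_mk, Fin.cons_succ, Fin.cons_zero]
    refine (lintegral_prod_mul (μ := (volume : Measure ℝ)) (ν := (volume : Measure (Fin n → ℝ))) (f := f 0) (g := fun x : Fin n → ℝ => ∏ i, f i.succ (x i)) (hf 0).aemeasurable ?_).trans ?_
    rotate_left
    · rw [ih _ (fun i => hf _)]
    · apply Measurable.aemeasurable
      exact Finset.measurable_prod _ fun i _ => (hf i.succ).comp (measurable_pi_apply i)

/-- The scalar form of the kernel bound. -/
noncomputable def Gs (D α p s r u v : ℝ) : ℝ :=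
  if r ≤ max u v then
    r ^ (α * s / 2 - D) * (min 1 (min (u / r) (v / r))) ^ p
  else
    r ^ (α * s / 2 - D) * (u * v / r ^ 2) ^ p *
      (1 + (r / max u v) ^ (max 0 (2 * p - α * (1 + s / 2)))
         + (if p = α * (1 + s / 2) / 2 then Real.log (r / max u v) else 0))

/-- Profile in the normal direction. -/
noncomputable def Hf (b β p₁ γ v u : ℝ) : ℝ :=
  (if u ≤ v then u ^ (p₁ - γ) * v ^ (β - 1 - p₁) else u ^ (β - 1 - p₁ - γ) * v ^ p₁)
   + (if |v - u| ≤ v then |v - u| ^ (b - 1) * v ^ (β - b - γ) else 0)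

lemma Hf_ge_a {b β p₁ γ v u : ℝ} (hv : 0 < v) (hu : 0 < u) (ht : 0 < |v - u|) (h : |v - u| ≤ v) :
    Real.exp ((b - 1) * Real.log |v - u| + (β - b - γ) * Real.log v) ≤ Hf b β p₁ γ v u := by
  have h1 : 0 ≤ (if u ≤ v then u ^ (p₁ - γ) * v ^ (β - 1 - p₁) else u ^ (β - 1 - p₁ - γ) * v ^ p₁) := by
    split_ifs <;> positivity
  have h2 : (if |v - u| ≤ v then |v - u| ^ (b - 1) * v ^ (β - b - γ) else 0) =
     Real.exp ((b - 1) * Real.log |v - u| + (β - b - γ) * Real.log v) := by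
    rw [if_pos h, Real.rpow_def_of_pos ht, Real.rpow_def_of_pos hv, ← Real.exp_add]
    congr 1; ring
  unfold Hf
  linarith

lemma Hf_ge_b {b β p₁ γ v u : ℝ} (hv : 0 < v) (hu : 0 < u) (h : u ≤ v) :
    Real.exp ((p₁ - γ) * Real.log u + (β - 1 - p₁) * Real.log v) ≤ Hf b β p₁ γ v u := by
  have h1 : 0 ≤ (if |v - u| ≤ v then |v - u| ^ (b - 1) * v ^ (β - b - γ) else 0) := by
    split_ifs <;> positivity
  have h2 : (if u ≤ v then u ^ (p₁ - γ) * v ^ (β - 1 - p₁) else u ^ (β - 1 - p₁ - γ) * v ^ p₁) =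
     Real.exp ((p₁ - γ) * Real.log u + (β - 1 - p₁) * Real.log v) := by
    rw [if_pos h, Real.rpow_def_of_pos hu, Real.rpow_def_of_pos hv, ← Real.exp_add]
    congr 1; ring
  unfold Hf
  linarith

lemma Hf_ge_c {b β p₁ γ v u : ℝ} (hv : 0 < v) (hu : 0 < u) (h : v < u) :
    Real.exp ((β - 1 - p₁ - γ) * Real.log u + p₁ * Real.log v) ≤ Hf b β p₁ γ v u := by
  have h1 : 0 ≤ (if |v - u| ≤ v then |v - u| ^ (b - 1) * v ^ (β - b - γ) else 0) := by
    split_ifs <;> positivity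
  have h2 : (if u ≤ v then u ^ (p₁ - γ) * v ^ (β - 1 - p₁) else u ^ (β - 1 - p₁ - γ) * v ^ p₁) =
     Real.exp ((β - 1 - p₁ - γ) * Real.log u + p₁ * Real.log v) := by
    rw [if_neg (not_le.2 h), Real.rpow_def_of_pos hu, Real.rpow_def_of_pos hv, ← Real.exp_add]
    congr 1; ring
  unfold Hf
  linarith

/-- Combination step: reduce to exponents. -/
lemma comb {n : ℕ} {G P H K A k g p h : ℝ} (hG : G ≤ A * Real.exp g) (hP : P = Real.exp p)
    (hH : Real.exp h ≤ H) (hA : 0 ≤ A) (hK : A * Real.exp k ≤ K) (hh : g ≤ k + n * p + h) :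
    G ≤ K * P ^ n * H := by
  have h1 : Real.exp g ≤ Real.exp k * Real.exp p ^ n * Real.exp h := by
    rw [← Real.exp_nat_mul, ← Real.exp_add, ← Real.exp_add]
    exact Real.exp_le_exp.2 hh
  calc G ≤ A * Real.exp g := hG
    _ ≤ A * (Real.exp k * Real.exp p ^ n * Real.exp h) := by gcongr
    _ = (A * Real.exp k) * P ^ n * Real.exp h := by rw [hP]; ring
    _ ≤ K * P ^ n * H := by
      have : 0 ≤ K := le_trans (by positivity) hK
      have : 0 < P := hP ▸ Real.exp_pos _
      gcongr

lemma bracket {q δ z : ℝ} (hq : 0 ≤ q) (hδ : 0 < δ) (hz : 1 ≤ z) (P : Prop) [Decidable P] :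
    1 + z ^ q + (if P then Real.log z else 0) ≤ (2 + 1/δ) * z ^ (q + δ) := by
  have h0 : 0 < z := by linarith
  have h1 : 1 ≤ z ^ (q + δ) := Real.one_le_rpow hz (by linarith)
  have h2 : z ^ q ≤ z ^ (q + δ) := Real.rpow_le_rpow_of_exponent_le hz (by linarith)
  have h3 : (if P then Real.log z else 0) ≤ 1/δ * z ^ (q + δ) := by
    split_ifs
    · calc _ ≤ z ^ δ / δ := Real.log_le_rpow_div h0.le hδ
        _ = 1/δ * z^δ := by ring
        _ ≤ _ := by
          have := Real.rpow_le_rpow_of_exponent_le hz (show δ ≤ q + δ by linarith)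
          gcongr
    · positivity
  linarith

set_option maxHeartbeats 1000000 in
lemma scalar (n : ℕ) {D α p s r u v β γ η e b δ q K : ℝ} (hD : D = n + 1) (hβ : β = α * s / 2)
    (hγ : 0 < γ) (hη : 0 < η) (he : e = n * η) (hb1 : b < 1) (hbβ : e ≤ β - b)
    (hβp : β < p + 1/2)
    (hq : q = max 0 (2 * p - α * (1 + s / 2))) (hδ : 0 < δ)
    (hfar : e + q + δ ≤ 1 + 2 * p - β) (hu : 0 < u) (hv : 0 < v) (ht : 0 < |v - u|)
    (htr : |v - u| ≤ r)
    (hK : K = (2 + 1/δ) * Real.exp ((γ + 1 + p - β + e) * Real.log 2)) :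
    Gs D α p s r u v * u ^ (-γ) ≤ K * (phi η v r) ^ n * Hf b β (p - e) γ v u := by
  have hr : 0 < r := ht.trans_le htr
  have hn : (0:ℝ) ≤ n := Nat.cast_nonneg n
  have he0 : 0 ≤ e := by rw [he]; positivity
  have hl2 : 0 < Real.log 2 := Real.log_pos (by norm_num)
  have hq0 : 0 ≤ q := hq ▸ le_max_left _ _
  have hk0 : 0 ≤ (γ + 1 + p - β + e) * Real.log 2 := by
    apply mul_nonneg _ hl2.le; linarith
  have hek : 1 ≤ Real.exp ((γ + 1 + p - β + e) * Real.log 2) := Real.one_le_exp hk0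
  have hK1 : 1 * Real.exp ((γ + 1 + p - β + e) * Real.log 2) ≤ K := by
    rw [hK]; gcongr; have : 0 < 1/δ := by positivity
    linarith
  have hK2 : (2 + 1/δ) * Real.exp 0 ≤ K := by
    rw [hK, Real.exp_zero]; gcongr
  have h2u : Real.log (2 * u) = Real.log 2 + Real.log u := Real.log_mul (by norm_num) hu.ne'
  have h2v : Real.log (2 * v) = Real.log 2 + Real.log v := Real.log_mul (by norm_num) hv.ne'
  have h2r : Real.log (2 * r) = Real.log 2 + Real.log r := Real.log_mul (by norm_num) hr.ne'
  have hab := abs_le.1 htr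
  rw [Real.rpow_def_of_pos hu]
  have hR1 : r ^ (α * s / 2 - D) = Real.exp ((β - D) * Real.log r) := by
    rw [Real.rpow_def_of_pos hr, hβ, mul_comm]
  unfold Gs
  rw [hR1]
  by_cases hM : r ≤ max u v
  · rw [if_pos hM]
    by_cases hm : r ≤ min u v
    · -- near diagonal
      have hru : r ≤ u := hm.trans (min_le_left _ _)
      have hrv : r ≤ v := hm.trans (min_le_right _ _)
      have : min 1 (min (u / r) (v / r)) = 1 := by
        apply min_eq_left; apply le_min <;> rw [one_le_div hr] <;> assumption
      rw [this, Real.one_rpow, mul_one, ← Real.exp_add]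
      refine comb (g := (β - D) * Real.log r + Real.log u * -γ) (A := 1) (by rw [one_mul])
        (phi_exp1 hv hr hrv) (Hf_ge_a hv hu ht (htr.trans hrv)) zero_le_one hK1 ?_
      have l1 := Real.log_le_log ht htr
      have l2 := Real.log_le_log hr hrv
      have l3 : Real.log v ≤ Real.log 2 + Real.log u := by
        rw [← h2u]; exact Real.log_le_log hv (by linarith)
      have e1 : n * (-Real.log r - η * (Real.log v - Real.log r)) =
        - n * Real.log r - e * (Real.log v - Real.log r) := by rw [he]; ring
      rw [e1, hD]
      linarith [mul_nonneg (sub_nonneg.2 hbβ) (sub_nonneg.2 l2), mul_nonneg (sub_nonneg.2 hb1.le) (sub_nonneg.2 l1), mul_nonneg hγ.le (sub_nonneg.2 l3), mul_nonneg (show 0 ≤ 1 + p - β + e by linarith) hl2.le]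
    · push Not at hm
      rcases le_or_gt u v with huv | huv
      · rw [max_eq_right huv] at hM
        rw [min_eq_left huv] at hm
        have : min 1 (min (u / r) (v / r)) = u / r := by
          rw [min_eq_left (a := u / r) (by gcongr), min_eq_right]
          rw [div_le_one hr]; exact hm.le
        rw [this, Real.rpow_def_of_pos (by positivity), Real.log_div hu.ne' hr.ne', ← Real.exp_add, ← Real.exp_add]
        refine comb (g := _) (A := 1) (by rw [one_mul])
          (phi_exp1 hv hr hM) (Hf_ge_b hv hu huv) zero_le_one hK1 ?_
        have l1 := Real.log_le_log hu huv
        have l2 := Real.log_le_log hr hM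
        have l3 : Real.log v ≤ Real.log 2 + Real.log r := by
          rw [← h2r]; exact Real.log_le_log hv (by linarith)
        have e1 : n * (-Real.log r - η * (Real.log v - Real.log r)) =
          - n * Real.log r - e * (Real.log v - Real.log r) := by rw [he]; ring
        rw [e1, hD]
        linarith [mul_nonneg (show 0 ≤ 1 + p - β + e by linarith) (sub_nonneg.2 l3), mul_nonneg he0 (sub_nonneg.2 l1), mul_nonneg hγ.le hl2.le]
      · rw [max_eq_left huv.le] at hM
        rw [min_eq_right huv.le] at hm
        have : min 1 (min (u / r) (v / r)) = v / r := by
          rw [min_eq_right (a := u / r) (by gcongr), min_eq_right]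
          rw [div_le_one hr]; exact hm.le
        rw [this, Real.rpow_def_of_pos (by positivity), Real.log_div hv.ne' hr.ne', ← Real.exp_add, ← Real.exp_add]
        refine comb (g := _) (A := 1) (by rw [one_mul])
          (phi_exp2 hv hr hm.le) (Hf_ge_c hv hu huv) zero_le_one hK1 ?_
        have l1 := Real.log_le_log hv huv.le
        have l2 := Real.log_le_log hr hM
        have l3 : Real.log u ≤ Real.log 2 + Real.log r := by
          rw [← h2r]; exact Real.log_le_log hu (by linarith)
        have e1 : n * (-Real.log r - η * (Real.log r - Real.log v)) =
          - n * Real.log r - e * (Real.log r - Real.log v) := by rw [he]; ring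
        rw [e1, hD]
        linarith [mul_nonneg (show 0 ≤ 1 + p - β by linarith) (sub_nonneg.2 l3), mul_nonneg he0 (sub_nonneg.2 l2), mul_nonneg hγ.le hl2.le, mul_nonneg he0 hl2.le]
  · rw [if_neg hM]
    push Not at hM
    have hur : u < r := (le_max_left _ _).trans_lt hM
    have hvr : v < r := (le_max_right _ _).trans_lt hM
    have hM0 : 0 < max u v := lt_max_of_lt_left hu
    have hz : 1 ≤ r / max u v := by rw [one_le_div hM0]; exact hM.le
    have hbr := bracket hq0 hδ hz (p = α * (1 + s / 2) / 2)
    rw [← hq]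
    have hpow : (u * v / r ^ 2) ^ p = Real.exp (p * (Real.log u + Real.log v - 2 * Real.log r)) := by
      rw [Real.rpow_def_of_pos (by positivity), Real.log_div (by positivity) (by positivity), Real.log_mul hu.ne' hv.ne', Real.log_pow, mul_comm]
      push_cast; rfl
    have hzp : (r / max u v) ^ (q + δ) = Real.exp ((q + δ) * (Real.log r - Real.log (max u v))) := by
      rw [Real.rpow_def_of_pos (by positivity), Real.log_div hr.ne' hM0.ne', mul_comm]
    rw [hzp] at hbr
    rw [hpow]
    have hG : Real.exp ((β - D) * Real.log r) * Real.exp (p * (Real.log u + Real.log v - 2 * Real.log r)) *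
        (1 + (r / max u v) ^ q + (if p = α * (1 + s / 2) / 2 then Real.log (r / max u v) else 0)) *
        Real.exp (Real.log u * -γ) ≤ (2 + 1/δ) * Real.exp ((β - D) * Real.log r + p * (Real.log u + Real.log v - 2 * Real.log r) + (q + δ) * (Real.log r - Real.log (max u v)) + Real.log u * -γ) := by
      calc _ ≤ Real.exp ((β - D) * Real.log r) * Real.exp (p * (Real.log u + Real.log v - 2 * Real.log r)) * ((2 + 1/δ) * Real.exp ((q + δ) * (Real.log r - Real.log (max u v)))) * Real.exp (Real.log u * -γ) := by gcongr
        _ = _ := by simp only [Real.exp_add]; ring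
    have l1 := Real.log_le_log hu hur.le
    have l2 := Real.log_le_log hv hvr.le
    have e1 : n * (-Real.log r - η * (Real.log r - Real.log v)) =
          - n * Real.log r - e * (Real.log r - Real.log v) := by rw [he]; ring
    rcases le_or_gt u v with huv | huv
    · rw [max_eq_right huv] at hG ⊢
      refine comb hG (phi_exp2 hv hr hvr.le) (Hf_ge_b hv hu huv) (by positivity) hK2 ?_
      have l3 := Real.log_le_log hu huv
      rw [e1, hD]
      linarith [mul_nonneg (sub_nonneg.2 hfar) (sub_nonneg.2 l2), mul_nonneg he0 (sub_nonneg.2 l3)]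
    · rw [max_eq_left huv.le] at hG ⊢
      refine comb hG (phi_exp2 hv hr hvr.le) (Hf_ge_c hv hu huv) (by positivity) hK2 ?_
      have l3 := Real.log_le_log hv huv.le
      rw [e1, hD]
      linarith [mul_nonneg (sub_nonneg.2 hfar) (sub_nonneg.2 l1), mul_nonneg he0 (sub_nonneg.2 l3)]

lemma Hf_meas (b β p₁ γ v : ℝ) : Measurable (Hf b β p₁ γ v) := by
  unfold Hf
  refine Measurable.add (Measurable.ite measurableSet_Iic (by fun_prop) (by fun_prop))
    (Measurable.ite (measurableSet_le (by fun_prop) (by fun_prop)) (by fun_prop) (by fun_prop))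

lemma Hf_int {b β p₁ γ v : ℝ} (hv : 0 < v) (hb : 0 < b) (h1 : γ < p₁ + 1) (h2 : β < p₁ + γ) :
    ∫⁻ u in Ioi 0, ENNReal.ofReal (Hf b β p₁ γ v u) ≤
      ENNReal.ofReal (1/(p₁ + 1 - γ) + 1/(p₁ + γ - β) + 2/b) * ENNReal.ofReal (v ^ (β - γ)) := by
  have hd1 : 0 < p₁ + 1 - γ := by linarith
  have hd2 : 0 < p₁ + γ - β := by linarith
  have hsplit : ∀ u ∈ Ioi (0:ℝ), ENNReal.ofReal (Hf b β p₁ γ v u) ≤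
     (if u ≤ v then ENNReal.ofReal (u ^ (p₁ - γ)) * ENNReal.ofReal (v ^ (β - 1 - p₁)) else ENNReal.ofReal (u ^ (β - 1 - p₁ - γ)) * ENNReal.ofReal (v ^ p₁))
      + (fun t => if t ≤ v then ENNReal.ofReal (t ^ (b - 1)) * ENNReal.ofReal (v ^ (β - b - γ)) else 0) |v - u| := by
    intro u hu
    have hu : 0 < u := hu
    unfold Hf
    refine (ENNReal.ofReal_add_le).trans (add_le_add ?_ ?_)
    · split_ifs <;> rw [ENNReal.ofReal_mul (by positivity)]
    · dsimp only
      split_ifs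
      · rw [ENNReal.ofReal_mul (by positivity)]
      · simp
  have hdisj : Disjoint (Ioc 0 v) (Ioi v) := by
      rw [Set.disjoint_left]; intro a h1 h2; exact absurd h1.2 (not_le.2 h2)
  refine (setLIntegral_mono' measurableSet_Ioi hsplit).trans ?_
  rw [lintegral_add_left (Measurable.ite measurableSet_Iic (by fun_prop) (by fun_prop))]
  rw [ENNReal.ofReal_add (by positivity) (by positivity), add_mul]
  have hvp : ∀ a c : ℝ, v ^ a * v ^ c = v ^ (a + c) := fun a c => (Real.rpow_add hv a c).symm
  refine add_le_add ?_ ?_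
  · rw [← Ioc_union_Ioi_eq_Ioi hv.le, lintegral_union measurableSet_Ioi hdisj, ENNReal.ofReal_add (by positivity) (by positivity), add_mul]
    refine add_le_add (le_of_eq ?_) (le_of_eq ?_)
    · rw [setLIntegral_congr_fun (g := fun u => ENNReal.ofReal (u ^ (p₁ - γ)) * ENNReal.ofReal (v ^ (β - 1 - p₁))) measurableSet_Ioc (fun t ht => if_pos ht.2), lintegral_mul_const' _ _ ofReal_ne_top, aux_int0 v _ hv (by linarith), ← ENNReal.ofReal_mul, ← ENNReal.ofReal_mul (by positivity)]
      · congr 1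
        rw [div_mul_eq_mul_div, hvp, show p₁ - γ + 1 = p₁ + 1 - γ by ring, show p₁ + 1 - γ + (β - 1 - p₁) = β - γ by ring]
        ring
      · rw [show p₁ - γ + 1 = p₁ + 1 - γ by ring]; positivity
    · rw [setLIntegral_congr_fun (g := fun u => ENNReal.ofReal (u ^ (β - 1 - p₁ - γ)) * ENNReal.ofReal (v ^ p₁)) measurableSet_Ioi (fun t ht => if_neg (not_le.2 ht)), lintegral_mul_const' _ _ ofReal_ne_top, aux_int1 v _ hv (by linarith), ← ENNReal.ofReal_mul, ← ENNReal.ofReal_mul (by positivity)]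
      · congr 1
        rw [div_mul_eq_mul_div, hvp, show -(β - 1 - p₁ - γ + 1) = p₁ + γ - β by ring, show (β - 1 - p₁ - γ + 1) + p₁ = β - γ by ring]
        ring
      · rw [show -(β - 1 - p₁ - γ + 1) = p₁ + γ - β by ring]; positivity
  · refine (setLIntegral_le_lintegral _ _).trans ?_
    rw [aux_abs (fun t => if t ≤ v then ENNReal.ofReal (t ^ (b - 1)) * ENNReal.ofReal (v ^ (β - b - γ)) else 0), ← Ioc_union_Ioi_eq_Ioi hv.le, lintegral_union measurableSet_Ioi hdisj]
    rw [setLIntegral_congr_fun (g := fun u => ENNReal.ofReal (u ^ (b - 1)) * ENNReal.ofReal (v ^ (β - b - γ))) measurableSet_Ioc (fun t ht => if_pos ht.2), lintegral_mul_const' _ _ ofReal_ne_top, aux_int0 v _ hv (by linarith)]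
    rw [setLIntegral_congr_fun (g := fun u => 0) measurableSet_Ioi (fun t ht => if_neg (not_le.2 ht))]
    rw [lintegral_zero, add_zero, ← ENNReal.ofReal_mul, show (2:ℝ≥0∞) = ENNReal.ofReal 2 by simp, ← ENNReal.ofReal_mul (by norm_num), ← ENNReal.ofReal_mul (by positivity)]
    · apply le_of_eq
      congr 1
      rw [div_mul_eq_mul_div, hvp, show b - 1 + 1 = b by ring, show b + (β - b - γ) = β - γ by ring]
      ring
    · rw [show b - 1 + 1 = b by ring]; positivity

lemma Gs_comm (D α p s r u v : ℝ) : Gs D α p s r u v = Gs D α p s r v u := by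
  unfold Gs
  rw [max_comm u v, min_comm (u / r), mul_comm u v]

lemma rieszBound_eq (d : ℕ) (hd : 1 ≤ d) (α p s : ℝ) (x y : EuclideanSpace ℝ (Fin d)) :
    rieszBound d hd α p s x y =
      Gs d α p s (dist x y) (lastCoord d hd y) (lastCoord d hd x) := by
  rw [Gs_comm]; rfl

lemma rieszBound_comm (d : ℕ) (hd : 1 ≤ d) (α p s : ℝ) (x y : EuclideanSpace ℝ (Fin d)) :
    rieszBound d hd α p s x y = rieszBound d hd α p s y x := by
  rw [rieszBound_eq, rieszBound_eq, Gs_comm, dist_comm]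

lemma lastCoord_meas (d : ℕ) (hd : 1 ≤ d) : Measurable (lastCoord d hd) := by
  unfold lastCoord; fun_prop

lemma rieszBound_meas (d : ℕ) (hd : 1 ≤ d) (α p s : ℝ) :
    Measurable (fun z : EuclideanSpace ℝ (Fin d) × EuclideanSpace ℝ (Fin d) =>
      rieszBound d hd α p s z.1 z.2) := by
  unfold rieszBound
  have h1 : Measurable (fun z : EuclideanSpace ℝ (Fin d) × EuclideanSpace ℝ (Fin d) => lastCoord d hd z.1) :=
    (lastCoord_meas d hd).comp measurable_fst
  have h2 : Measurable (fun z : EuclideanSpace ℝ (Fin d) × EuclideanSpace ℝ (Fin d) => lastCoord d hd z.2) :=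
    (lastCoord_meas d hd).comp measurable_snd
  refine Measurable.ite (measurableSet_le (by fun_prop) (by fun_prop)) (by fun_prop) ?_
  refine Measurable.mul (by fun_prop) (Measurable.add (by fun_prop) ?_)
  split_ifs <;> fun_prop

lemma schurA (d : ℕ) (hd : 1 ≤ d) (α p s β γ : ℝ) (hα : 0 < α) (hβ : β = α * s / 2) (hβ0 : 0 < β)
    (hβp : β < p + 1/2) (hγ : 0 < γ) (hγ1 : γ < p + 1) (hγ2 : β < p + γ) :
    ∃ C : ℝ, 0 < C ∧ ∀ x, 0 < lastCoord d hd x →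
      ∫⁻ y in {y | 0 < lastCoord d hd y},
        ENNReal.ofReal (rieszBound d hd α p s x y * (lastCoord d hd y) ^ (-γ)) ≤
      ENNReal.ofReal C * ENNReal.ofReal ((lastCoord d hd x) ^ (β - γ)) := by
  obtain ⟨n, rfl⟩ : ∃ n, d = n + 1 := ⟨d - 1, by omega⟩
  obtain ⟨q, hq⟩ : ∃ q, q = max 0 (2 * p - α * (1 + s / 2)) := ⟨_, rfl⟩
  have hqlt : 0 < 1 + 2 * p - β - q := by
    rw [hq]; rcases max_cases 0 (2 * p - α * (1 + s / 2)) with ⟨h, _⟩ | ⟨h, _⟩ <;> rw [h]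
    · linarith
    · rw [hβ]; linarith
  obtain ⟨δ, hδ⟩ : ∃ δ, δ = (1 + 2 * p - β - q) / 2 := ⟨_, rfl⟩
  have hδ0 : 0 < δ := by linarith
  obtain ⟨e₀, he₀, h1, h2, h3, h4, h5⟩ : ∃ e₀ : ℝ, 0 < e₀ ∧ e₀ ≤ β / 2 ∧ e₀ ≤ δ ∧
      e₀ ≤ (p + 1 - γ) / 2 ∧ e₀ ≤ (p + γ - β) / 2 ∧ e₀ ≤ 1/2 := by
    refine ⟨min (β/2) (min δ (min ((p + 1 - γ) / 2) (min ((p + γ - β) / 2) (1/2)))), ?_, ?_⟩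
    · refine lt_min (by linarith) (lt_min hδ0 (lt_min (by linarith) (lt_min (by linarith) (by norm_num))))
    · simp
  have hn1 : (0:ℝ) < n + 1 := by positivity
  have hn : (0:ℝ) ≤ n := by positivity
  obtain ⟨η, hη⟩ : ∃ η, η = e₀ / (n + 1) := ⟨_, rfl⟩
  have hη0 : 0 < η := by rw [hη]; positivity
  have hηe : (n + 1) * η = e₀ := by rw [hη]; field_simp
  have hη1 : η < 1 := by nlinarith
  obtain ⟨e, he⟩ : ∃ e, e = n * η := ⟨_, rfl⟩
  have hee : e ≤ e₀ := by rw [he]; linarith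
  obtain ⟨b, hb0, hb1, hbβ⟩ : ∃ b : ℝ, 0 < b ∧ b < 1 ∧ b ≤ β / 2 :=
    ⟨min (β/2) (1/2), lt_min (by linarith) (by norm_num), (min_le_right _ _).trans_lt (by norm_num), min_le_left _ _⟩
  obtain ⟨K, hK⟩ : ∃ K, K = (2 + 1/δ) * Real.exp ((γ + 1 + p - β + e) * Real.log 2) := ⟨_, rfl⟩
  have hK0 : 0 < K := by rw [hK]; positivity
  obtain ⟨B, hB⟩ : ∃ B, B = 1/((p - e) + 1 - γ) + 1/((p - e) + γ - β) + 2/b := ⟨_, rfl⟩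
  have hB0 : 0 < B := by
    have : 0 < (p - e) + 1 - γ := by linarith
    have : 0 < (p - e) + γ - β := by linarith
    rw [hB]; positivity
  refine ⟨K * (B * (4 / η) ^ n), by positivity, fun x hx => ?_⟩
  set l : Fin (n + 1) := ⟨n + 1 - 1, by omega⟩ with hl
  set v := lastCoord (n + 1) hd x with hv
  have hlast : ∀ y, lastCoord (n + 1) hd y = y l := fun y => rfl
  let h : Fin (n + 1) → ℝ → ℝ≥0∞ := fun i t =>
    if i = l then (Ioi (0:ℝ)).indicator (fun u => ENNReal.ofReal (Hf b β (p - e) γ v u)) t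
    else ENNReal.ofReal (phi η v |x i - t|)
  have hmeas : ∀ i, Measurable (h i) := by
    intro i
    by_cases hi : i = l
    · simp only [h, if_pos hi]
      exact ((Hf_meas _ _ _ _ _).ennreal_ofReal).indicator measurableSet_Ioi
    · simp only [h, if_neg hi]
      exact ((phi_meas η v).comp (by fun_prop)).ennreal_ofReal
  have hset : MeasurableSet {y | 0 < lastCoord (n + 1) hd y} :=
    measurableSet_lt measurable_const (lastCoord_meas _ hd)
  have hpt : ∀ᵐ y : EuclideanSpace ℝ (Fin (n + 1)), {y | 0 < lastCoord (n + 1) hd y}.indicator (fun y =>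
      ENNReal.ofReal (rieszBound (n + 1) hd α p s x y * (lastCoord (n + 1) hd y) ^ (-γ))) y ≤
      ENNReal.ofReal K * ∏ i, h i (y i) := by
    have hae : ∀ᵐ y : Fin (n + 1) → ℝ, ∀ i, y i ≠ x i :=
      ae_all_iff.2 fun i => Measure.ae_eval_ne (fun _ => (volume : Measure ℝ)) i (x i)
    have hae' := (PiLp.volume_preserving_ofLp (Fin (n + 1))).quasiMeasurePreserving.ae hae
    filter_upwards [hae'] with y hy
    by_cases hyp : 0 < lastCoord (n + 1) hd y
    swap
    · rw [indicator_of_notMem (by exact hyp)]; exact bot_le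
    rw [indicator_of_mem (by exact hyp), rieszBound_eq]
    have hcoord : ∀ i, |x i - y i| ≤ dist x y := by
      intro i
      rw [dist_eq_norm]
      exact PiLp.norm_apply_le (x - y) i
    have hpos : ∀ i, 0 < |x i - y i| := fun i => abs_pos.2 (sub_ne_zero.2 (hy i).symm)
    have hs := scalar n (D := ((n + 1 : ℕ) : ℝ)) (α := α) (p := p) (s := s) (r := dist x y)
      (u := lastCoord (n + 1) hd y) (v := v) (β := β) (γ := γ) (η := η) (e := e) (b := b) (δ := δ)
      (q := q) (K := K) (by push_cast; rfl) hβ hγ hη0 he hb1 (by linarith) hβp hq hδ0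
      (by linarith) hyp hx (hpos l) (hcoord l) hK
    refine (ENNReal.ofReal_le_ofReal hs).trans ?_
    have hr0 : 0 ≤ phi η v (dist x y) := phi_nonneg _ _ _ hx dist_nonneg
    rw [ENNReal.ofReal_mul (by positivity), ENNReal.ofReal_mul (by positivity), mul_assoc]
    gcongr
    rw [← Finset.prod_erase_mul _ _ (Finset.mem_univ l)]
    refine mul_le_mul' ?_ ?_
    · rw [ENNReal.ofReal_pow hr0]
      have : ∀ a : ℝ≥0∞, a ^ n = ∏ _i ∈ Finset.univ.erase l, a := by simp
      rw [this]
      refine Finset.prod_le_prod' fun i hi => ?_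
      simp only [h, if_neg (Finset.ne_of_mem_erase hi)]
      exact ENNReal.ofReal_le_ofReal (phi_anti hη0 hη1 hx (hpos i) (hcoord i))
    · simp only [h, if_true]
      rw [indicator_of_mem (by exact hyp)]
      exact le_rfl
  rw [← lintegral_indicator hset]
  refine (lintegral_mono_ae hpt).trans ?_
  rw [lintegral_const_mul' _ _ ofReal_ne_top]
  have hpi : ∫⁻ y : EuclideanSpace ℝ (Fin (n + 1)), ∏ i, h i (y i) = ∏ i, ∫⁻ t, h i t := by
    rw [← lintegral_pi_prod _ h hmeas]
    exact (PiLp.volume_preserving_ofLp (Fin (n + 1))).lintegral_comp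
      (f := fun y => ∏ i, h i (y i)) (Finset.measurable_prod _ fun i _ => (hmeas i).comp (measurable_pi_apply i))
  rw [hpi, ENNReal.ofReal_mul hK0.le, mul_assoc]
  gcongr
  rw [← Finset.prod_erase_mul _ _ (Finset.mem_univ l), mul_comm B, ENNReal.ofReal_mul (by positivity), mul_assoc]
  refine mul_le_mul' ?_ ?_
  · rw [ENNReal.ofReal_pow (by positivity)]
    have : ∀ a : ℝ≥0∞, a ^ n = ∏ _i ∈ Finset.univ.erase l, a := by simp
    rw [this]
    refine Finset.prod_le_prod' fun i hi => ?_
    simp only [h, if_neg (Finset.ne_of_mem_erase hi)]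
    exact phi_int _ _ _ hη0 hx
  · simp only [h, if_true]
    rw [lintegral_indicator measurableSet_Ioi, hB]
    exact Hf_int hx hb0 (by linarith) (by linarith)

/-- Schur test. -/
lemma schur {X : Type*} [MeasurableSpace X] (μ : Measure X) [SFinite μ] (k : X → X → ℝ≥0∞)
    (hk : Measurable (Function.uncurry k)) (w : X → ℝ≥0∞) (hw : Measurable w)
    (hw0 : ∀ᵐ x ∂μ, w x ≠ 0) (hwt : ∀ᵐ x ∂μ, w x ≠ ⊤) (A B : ℝ≥0∞)
    (h1 : ∀ᵐ x ∂μ, ∫⁻ y, k x y * w y ∂μ ≤ A * w x)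
    (h2 : ∀ᵐ y ∂μ, ∫⁻ x, k x y * w x ∂μ ≤ B * w y)
    (f g : X → ℝ≥0∞) (hf : Measurable f) (hg : Measurable g) :
    ∫⁻ x, ∫⁻ y, k x y * f x * g y ∂μ ∂μ ≤
      (A ^ ((1:ℝ)/2) * B ^ ((1:ℝ)/2)) * (∫⁻ x, f x ^ 2 ∂μ) ^ ((1:ℝ)/2) * (∫⁻ x, g x ^ 2 ∂μ) ^ ((1:ℝ)/2) := by
  have hk1 : ∀ x, Measurable (k x) := fun x => hk.comp measurable_prodMk_left
  have hk2 : ∀ y, Measurable (fun x => k x y) := fun y => hk.comp measurable_prodMk_right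
  have hk' : Measurable (fun z : X × X => k z.1 z.2) := hk
  let F : X × X → ℝ≥0∞ := fun z => (k z.1 z.2 * f z.1 ^ 2 * (w z.1)⁻¹ * w z.2) ^ ((1:ℝ)/2)
  let H : X × X → ℝ≥0∞ := fun z => (k z.1 z.2 * g z.2 ^ 2 * (w z.2)⁻¹ * w z.1) ^ ((1:ℝ)/2)
  have hF : Measurable F := by fun_prop
  have hH : Measurable H := by fun_prop
  have hcs := ENNReal.lintegral_mul_le_Lp_mul_Lq (μ.prod μ) Real.HolderConjugate.two_two
    hF.aemeasurable hH.aemeasurable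
  have hF2 : ∫⁻ z, F z ^ (2:ℝ) ∂(μ.prod μ) ≤ A * ∫⁻ x, f x ^ 2 ∂μ := by
    rw [lintegral_prod _ (by fun_prop), ← lintegral_const_mul _ (by fun_prop)]
    refine lintegral_mono_ae ?_
    filter_upwards [h1, hw0, hwt] with x hx h0 ht
    calc ∫⁻ y, F (x, y) ^ (2:ℝ) ∂μ = ∫⁻ y, (f x ^ 2 * (w x)⁻¹) * (k x y * w y) ∂μ := by
          refine lintegral_congr fun y => ?_
          simp only [F]
          rw [← ENNReal.rpow_mul]; norm_num; ring
      _ = (f x ^ 2 * (w x)⁻¹) * ∫⁻ y, k x y * w y ∂μ := lintegral_const_mul _ ((hk1 x).mul hw)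
      _ ≤ (f x ^ 2 * (w x)⁻¹) * (A * w x) := by gcongr
      _ = A * f x ^ 2 * ((w x)⁻¹ * w x) := by ring
      _ = A * f x ^ 2 := by rw [ENNReal.inv_mul_cancel h0 ht, mul_one]
  have hH2 : ∫⁻ z, H z ^ (2:ℝ) ∂(μ.prod μ) ≤ B * ∫⁻ x, g x ^ 2 ∂μ := by
    rw [lintegral_prod_symm _ (by fun_prop), ← lintegral_const_mul _ (by fun_prop)]
    refine lintegral_mono_ae ?_
    filter_upwards [h2, hw0, hwt] with y hx h0 ht
    calc ∫⁻ x, H (x, y) ^ (2:ℝ) ∂μ = ∫⁻ x, (g y ^ 2 * (w y)⁻¹) * (k x y * w x) ∂μ := by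
          refine lintegral_congr fun x => ?_
          simp only [H]
          rw [← ENNReal.rpow_mul]; norm_num; ring
      _ = (g y ^ 2 * (w y)⁻¹) * ∫⁻ x, k x y * w x ∂μ := lintegral_const_mul _ ((hk2 y).mul hw)
      _ ≤ (g y ^ 2 * (w y)⁻¹) * (B * w y) := by gcongr
      _ = B * g y ^ 2 * ((w y)⁻¹ * w y) := by ring
      _ = B * g y ^ 2 := by rw [ENNReal.inv_mul_cancel h0 ht, mul_one]
  have hlhs : ∫⁻ x, ∫⁻ y, k x y * f x * g y ∂μ ∂μ = ∫⁻ z, (F * H) z ∂(μ.prod μ) := by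
    rw [lintegral_prod _ (by fun_prop)]
    refine lintegral_congr_ae ?_
    filter_upwards [hw0, hwt] with x h0 ht
    refine lintegral_congr_ae ?_
    filter_upwards [hw0, hwt] with y h0' ht'
    simp only [F, H, Pi.mul_apply]
    rw [← ENNReal.mul_rpow_of_nonneg _ _ (by norm_num)]
    have : k x y * f x ^ 2 * (w x)⁻¹ * w y * (k x y * g y ^ 2 * (w y)⁻¹ * w x) = (k x y * f x * g y) ^ (2:ℝ) := by
      calc _ = (k x y * f x * g y) ^ 2 * ((w x)⁻¹ * w x) * ((w y)⁻¹ * w y) := by ring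
        _ = _ := by
          rw [ENNReal.inv_mul_cancel h0 ht, ENNReal.inv_mul_cancel h0' ht']
          norm_num
    rw [this, ← ENNReal.rpow_mul]; norm_num
  rw [hlhs]
  refine hcs.trans ?_
  have h12 : (0:ℝ) ≤ 1/2 := by norm_num
  calc _ ≤ (A * ∫⁻ x, f x ^ 2 ∂μ) ^ ((1:ℝ)/2) * (B * ∫⁻ x, g x ^ 2 ∂μ) ^ ((1:ℝ)/2) := by gcongr
    _ = _ := by
      rw [ENNReal.mul_rpow_of_nonneg _ _ h12, ENNReal.mul_rpow_of_nonneg _ _ h12]; ring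

theorem stmt_15 (d : ℕ) (hd : 1 ≤ d) (α p s : ℝ) (hα1 : 0 < α) (hα2 : α < 2)
    (hp1 : (α - 1) / 2 < p) (hp2 : p < α)
    (hs1 : 0 < s) (hs2 : s < min ((1 + 2 * p) / α) (2 * d / α)) :
    ∃ C : ℝ, 0 < C ∧ ∀ f g : EuclideanSpace ℝ (Fin d) → ℝ≥0∞,
      Measurable f → Measurable g →
      (∫⁻ x in {x | 0 < lastCoord d hd x}, ∫⁻ y in {y | 0 < lastCoord d hd y},
          ENNReal.ofReal ((lastCoord d hd x) ^ (-(α * s / 2)) * rieszBound d hd α p s x y)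
            * f x * g y)
        ≤ ENNReal.ofReal C
            * (∫⁻ x in {x | 0 < lastCoord d hd x}, f x ^ 2) ^ ((1:ℝ)/2)
            * (∫⁻ y in {y | 0 < lastCoord d hd y}, g y ^ 2) ^ ((1:ℝ)/2) := by
  obtain ⟨β, hβ⟩ : ∃ β, β = α * s / 2 := ⟨_, rfl⟩
  have hβ0 : 0 < β := by rw [hβ]; positivity
  have hβp : β < p + 1/2 := by
    have := (lt_div_iff₀ hα1).1 (hs2.trans_le (min_le_left _ _))
    rw [hβ]; linarith
  obtain ⟨A, hA0, hA⟩ := schurA d hd α p s β (1/2) hα1 hβ hβ0 hβp (by norm_num) (by linarith) hβp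
  obtain ⟨B, hB0, hB⟩ := schurA d hd α p s β (β + 1/2) hα1 hβ hβ0 hβp (by linarith) (by linarith)
    (by linarith)
  have hset : MeasurableSet {y | 0 < lastCoord d hd y} :=
    measurableSet_lt measurable_const (lastCoord_meas _ hd)
  have hmem : ∀ᵐ x ∂(volume.restrict {y | 0 < lastCoord d hd y}), 0 < lastCoord d hd x :=
    ae_restrict_mem hset
  refine ⟨A ^ ((1:ℝ)/2) * B ^ ((1:ℝ)/2), by positivity, fun f g hf hg => ?_⟩
  rw [ENNReal.ofReal_mul (by positivity), ← ENNReal.ofReal_rpow_of_pos hA0, ← ENNReal.ofReal_rpow_of_pos hB0]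
  have hlm := lastCoord_meas d hd
  refine schur (volume.restrict {y | 0 < lastCoord d hd y})
    (fun x y => ENNReal.ofReal ((lastCoord d hd x) ^ (-(α * s / 2)) * rieszBound d hd α p s x y))
    ?_ (fun x => ENNReal.ofReal ((lastCoord d hd x) ^ (-(1/2) : ℝ))) (by fun_prop) ?_ ?_
    (ENNReal.ofReal A) (ENNReal.ofReal B) ?_ ?_ f g hf hg
  · have h1 := rieszBound_meas d hd α p s
    have h2 : Measurable (fun z : EuclideanSpace ℝ (Fin d) × EuclideanSpace ℝ (Fin d) => lastCoord d hd z.1) :=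
      hlm.comp measurable_fst
    exact ((h2.pow_const _).mul h1).ennreal_ofReal
  · filter_upwards [hmem] with x hx
    simp only [ne_eq, ENNReal.ofReal_eq_zero, not_le]
    positivity
  · exact Filter.Eventually.of_forall fun x => ofReal_ne_top
  · filter_upwards [hmem] with x hx
    rw [← hβ]
    calc _ = ∫⁻ y in {y | 0 < lastCoord d hd y}, ENNReal.ofReal ((lastCoord d hd x) ^ (-β)) *
            ENNReal.ofReal (rieszBound d hd α p s x y * (lastCoord d hd y) ^ (-(1/2) : ℝ)) := by
          refine setLIntegral_congr_fun hset fun y hy => ?_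
          have hy : 0 < lastCoord d hd y := hy
          rw [← ENNReal.ofReal_mul' (by positivity), ← ENNReal.ofReal_mul (by positivity), mul_assoc]
      _ ≤ ENNReal.ofReal ((lastCoord d hd x) ^ (-β)) * (ENNReal.ofReal A * ENNReal.ofReal ((lastCoord d hd x) ^ (β - 1/2))) := by
          rw [lintegral_const_mul' _ _ ofReal_ne_top]
          gcongr
          exact hA x hx
      _ = _ := by
          rw [mul_left_comm, ← ENNReal.ofReal_mul (by positivity), ← Real.rpow_add hx]
          congr 3; ring
  · filter_upwards [hmem] with y hy
    rw [← hβ]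
    calc _ = ∫⁻ x in {y | 0 < lastCoord d hd y}, 
            ENNReal.ofReal (rieszBound d hd α p s y x * (lastCoord d hd x) ^ (-(β + 1/2))) := by
          refine setLIntegral_congr_fun hset fun x hx => ?_
          have hx : 0 < lastCoord d hd x := hx
          rw [← ENNReal.ofReal_mul' (by positivity), rieszBound_comm d hd α p s x y, mul_right_comm, ← Real.rpow_add hx, mul_comm]
          congr 3; ring
      _ ≤ _ := hB y hy
      _ = _ := by
          congr 3; ring
end

section
/- Let α ∈ (0,1), d ≥ 1, p ≥ 0, R ≥ 1. Suppose v : ℝ^d → ℝ is supported in the closed upper half-space and satisfies |v(y)| ≤ (1 ∧ |y|^{−d−α})(1 ∧ y_d)^p, and χ : ℝ^d → [0,1] satisfies χ = 1 on {|x| ≤ R}, χ = 0 on {|x| ≥ 2R}, and |∇χ| ≤ C/R. Then for all x ∈ ℝ₊^d, |∫_{ℝ^d} (χ(x) − χ(y)) |x−y|^{−d−α} v(y) dy| ≤ C' (1_{|x|≤R} R^{−d−2α} + 1_{|x|>R} |x|^{−d−α}), with C' depending only on d, α, p, C. Consequently the L²(ℝ₊^d) norm of this function of x is at most a constant times R^{−α−d/2}.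 -/
open MeasureTheory Set

namespace Aux

lemma w_integrable (d : ℕ) (s : ℝ) (hs : (d : ℝ) < s) :
    Integrable (fun y : EuclideanSpace ℝ (Fin d) => min 1 (‖y‖ ^ (-s))) := by
  have hs0 : 0 < s := lt_of_le_of_lt (Nat.cast_nonneg d) hs
  have h := (integrable_one_add_norm (E := EuclideanSpace ℝ (Fin d)) (μ := volume) (r := s)
    (by simpa using hs)).const_mul (2 ^ s)
  refine h.mono' (by apply Measurable.aestronglyMeasurable; fun_prop) (ae_of_all _ fun y => ?_)
  have hn := norm_nonneg y
  rw [Real.norm_of_nonneg (le_min zero_le_one (Real.rpow_nonneg hn _))]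
  have e : (2 : ℝ) ^ s * (1 + ‖y‖) ^ (-s) = ((1 + ‖y‖) / 2) ^ (-s) := by
    rw [Real.div_rpow (by positivity) (by norm_num), Real.rpow_neg (by norm_num : (0:ℝ) ≤ 2)]
    field_simp
  rw [e]
  rcases le_total ‖y‖ 1 with h1 | h1
  · refine (min_le_left _ _).trans ?_
    exact Real.one_le_rpow_of_pos_of_le_one_of_nonpos (by positivity) (by linarith) (by linarith)
  · refine (min_le_right _ _).trans ?_
    exact Real.rpow_le_rpow_of_nonpos (by positivity) (by linarith) (by linarith)

lemma m_integrable (d : ℕ) (hd : 1 ≤ d) (α C : ℝ) (hα1 : 0 < α) (hα2 : α < 1) (hC : 0 < C) :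
    Integrable (fun z : EuclideanSpace ℝ (Fin d) =>
      min 1 (C * ‖z‖) * ‖z‖ ^ (-((d : ℝ) + α))) := by
  have : Nonempty (Fin d) := ⟨⟨0, hd⟩⟩
  have : Nontrivial (EuclideanSpace ℝ (Fin d)) := inferInstance
  rw [integrable_fun_norm_addHaar (μ := (volume : Measure (EuclideanSpace ℝ (Fin d))))
    (f := fun r : ℝ => min 1 (C * r) * r ^ (-((d : ℝ) + α)))]
  have key : ∀ y : ℝ, 0 < y → y ^ (d - 1) * y ^ (-((d : ℝ) + α)) = y ^ (-1 - α) := by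
    intro y hy
    rw [← Real.rpow_natCast, ← Real.rpow_add hy, Nat.cast_sub hd]
    congr 1; push_cast; ring
  have hmeas : ∀ S : Set ℝ, AEStronglyMeasurable (fun y : ℝ =>
      y ^ (Module.finrank ℝ (EuclideanSpace ℝ (Fin d)) - 1) •
        (min 1 (C * y) * y ^ (-((d : ℝ) + α)))) (volume.restrict S) := by
    intro S
    apply Measurable.aestronglyMeasurable
    simp only [smul_eq_mul]
    fun_prop
  rw [← Ioc_union_Ioi_eq_Ioi (zero_le_one' ℝ)]
  refine IntegrableOn.union ?_ ?_
  · have h := ((intervalIntegral.intervalIntegrable_rpow' (a := 0) (b := 1)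
      (r := -α) (by linarith)).1).const_mul C
    refine Integrable.mono' h (hmeas _) ?_
    refine (ae_restrict_iff' measurableSet_Ioc).2 (ae_of_all _ fun y hy => ?_)
    have hy0 : 0 < y := hy.1
    rw [Real.norm_of_nonneg (by positivity)]
    simp only [finrank_euclideanSpace, Fintype.card_fin, smul_eq_mul]
    calc y ^ (d - 1) * (min 1 (C * y) * y ^ (-((d : ℝ) + α)))
        = min 1 (C * y) * (y ^ (d - 1) * y ^ (-((d : ℝ) + α))) := by ring
      _ ≤ (C * y) * y ^ (-1 - α) := by
          rw [key y hy0]; gcongr; exact min_le_right _ _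
      _ = C * y ^ (-α) := by
          rw [mul_assoc]; congr 1
          nth_rewrite 1 [← Real.rpow_one y]
          rw [← Real.rpow_add hy0]; congr 1; ring
  · have h := integrableOn_Ioi_rpow_of_lt (a := -1 - α) (c := 1) (by linarith) one_pos
    refine Integrable.mono' h (hmeas _) ?_
    refine (ae_restrict_iff' measurableSet_Ioi).2 (ae_of_all _ fun y hy => ?_)
    have hy0 : 0 < y := lt_trans one_pos hy
    rw [Real.norm_of_nonneg (by positivity)]
    simp only [finrank_euclideanSpace, Fintype.card_fin, smul_eq_mul]
    calc y ^ (d - 1) * (min 1 (C * y) * y ^ (-((d : ℝ) + α)))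
        = min 1 (C * y) * (y ^ (d - 1) * y ^ (-((d : ℝ) + α))) := by ring
      _ ≤ 1 * y ^ (-1 - α) := by
          rw [key y hy0]; gcongr; exact min_le_left _ _
      _ = _ := one_mul _

/-- scaling and translation -/
lemma scale (d : ℕ) (f : EuclideanSpace ℝ (Fin d) → ℝ) (hf : Integrable f) (R : ℝ) (hR : 0 < R)
    (x : EuclideanSpace ℝ (Fin d)) :
    Integrable (fun y => f (R⁻¹ • (x - y))) ∧
      ∫ y, f (R⁻¹ • (x - y)) = R ^ (d : ℝ) * ∫ z, f z := by
  have h1 : Integrable (fun z => f (R⁻¹ • z)) :=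
    (integrable_comp_smul_iff volume f (inv_ne_zero hR.ne')).2 hf
  refine ⟨h1.comp_sub_left x, ?_⟩
  rw [integral_sub_left_eq_self (fun z => f (R⁻¹ • z)) volume x,
    Measure.integral_comp_inv_smul_of_nonneg volume f hR.le]
  simp [Real.rpow_natCast]

lemma norm_scale {d : ℕ} (R s : ℝ) (hR : 0 < R) (z : EuclideanSpace ℝ (Fin d)) :
    R ^ (-s) * ‖R⁻¹ • z‖ ^ (-s) = ‖z‖ ^ (-s) := by
  rw [← Real.mul_rpow hR.le (norm_nonneg _), norm_smul, Real.norm_of_nonneg (by positivity),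
    mul_inv_cancel_left₀ hR.ne']

lemma half_rpow {a b s : ℝ} (ha : 0 < a) (hs : 0 < s) (hb : a / 2 ≤ b) :
    b ^ (-s) ≤ 2 ^ s * a ^ (-s) := by
  have e : (2 : ℝ) ^ s * a ^ (-s) = (a / 2) ^ (-s) := by
    rw [Real.div_rpow ha.le (by norm_num), Real.rpow_neg (by norm_num : (0:ℝ) ≤ 2)]
    field_simp
  rw [e]
  exact Real.rpow_le_rpow_of_nonpos (by positivity) hb (by linarith)

/-- The pointwise bound. -/
lemma pointwise (d : ℕ) (α C : ℝ) (hα1 : 0 < α) (hC : 0 < C)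
    (hm : Integrable (fun z : EuclideanSpace ℝ (Fin d) =>
      min 1 (C * ‖z‖) * ‖z‖ ^ (-((d : ℝ) + α))))
    (hw : Integrable (fun y : EuclideanSpace ℝ (Fin d) => min 1 (‖y‖ ^ (-((d : ℝ) + α)))))
    (R : ℝ) (hR : 1 ≤ R) (v χ : EuclideanSpace ℝ (Fin d) → ℝ)
    (hv : ∀ y, |v y| ≤ min 1 (‖y‖ ^ (-((d : ℝ) + α))))
    (hχ : ∀ x, 0 ≤ χ x ∧ χ x ≤ 1) (hχ1 : ∀ x, ‖x‖ ≤ R → χ x = 1)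
    (hlip : ∀ x y, |χ x - χ y| ≤ C / R * ‖x - y‖)
    (x : EuclideanSpace ℝ (Fin d)) :
    |∫ y : EuclideanSpace ℝ (Fin d), (χ x - χ y) * ‖x - y‖ ^ (-((d : ℝ) + α)) * v y| ≤
      (2 ^ ((d : ℝ) + α) *
        ((∫ z : EuclideanSpace ℝ (Fin d), min 1 (C * ‖z‖) * ‖z‖ ^ (-((d : ℝ) + α))) +
          ∫ y : EuclideanSpace ℝ (Fin d), min 1 (‖y‖ ^ (-((d : ℝ) + α))))) *
      (if ‖x‖ ≤ R then R ^ (-((d : ℝ) + 2 * α)) else ‖x‖ ^ (-((d : ℝ) + α))) := by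
  have hR0 : 0 < R := by linarith
  set m : EuclideanSpace ℝ (Fin d) → ℝ := fun z => min 1 (C * ‖z‖) * ‖z‖ ^ (-((d : ℝ) + α)) with hmdef
  set w : EuclideanSpace ℝ (Fin d) → ℝ := fun y => min 1 (‖y‖ ^ (-((d : ℝ) + α))) with hwdef
  have hm0 : ∀ z, 0 ≤ m z := fun z => by simp only [hmdef]; positivity
  have hw0 : ∀ z, 0 ≤ w z := fun z => by simp only [hwdef]; positivity
  have hK : 0 ≤ ∫ z, m z := integral_nonneg hm0
  have hW : 0 ≤ ∫ z, w z := integral_nonneg hw0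
  have hs : 0 < (d : ℝ) + α := by positivity
  have hχd : ∀ x y, |χ x - χ y| ≤ 1 := fun x y => by
    rw [abs_le]; constructor <;> linarith [(hχ x).1, (hχ x).2, (hχ y).1, (hχ y).2]
  have h1 : ∀ y, |χ x - χ y| * ‖x - y‖ ^ (-((d : ℝ) + α)) ≤
      R ^ (-((d : ℝ) + α)) * m (R⁻¹ • (x - y)) := by
    intro y
    simp only [hmdef]
    rw [mul_left_comm, norm_scale R _ hR0]
    gcongr
    refine le_min (hχd x y) ((hlip x y).trans (le_of_eq ?_))
    rw [norm_smul, Real.norm_of_nonneg (by positivity)]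
    field_simp
  obtain ⟨hi, he⟩ : Integrable (fun y => m (R⁻¹ • (x - y))) ∧
      ∫ y, m (R⁻¹ • (x - y)) = R ^ (d : ℝ) * ∫ z, m z := scale d m hm R hR0 x
  have hwr : ∀ y, w y ≤ ‖y‖ ^ (-((d : ℝ) + α)) := fun y => min_le_right _ _
  replace hv : ∀ y, |v y| ≤ w y := hv
  clear_value m w
  have hpow : R ^ (-((d : ℝ) + α)) * R ^ (d : ℝ) = R ^ (-α) := by
    rw [← Real.rpow_add hR0]; congr 1; ring
  have habs : ∀ y, ‖(χ x - χ y) * ‖x - y‖ ^ (-((d : ℝ) + α)) * v y‖ =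
      |χ x - χ y| * ‖x - y‖ ^ (-((d : ℝ) + α)) * |v y| := by
    intro y
    rw [Real.norm_eq_abs, abs_mul, abs_mul, abs_of_nonneg (Real.rpow_nonneg (norm_nonneg _) _)]
  have h2 : (1 : ℝ) ≤ 2 ^ ((d : ℝ) + α) := Real.one_le_rpow (by norm_num) hs.le
  rw [← Real.norm_eq_abs]
  split_ifs with hx
  · calc ‖∫ y, (χ x - χ y) * ‖x - y‖ ^ (-((d : ℝ) + α)) * v y‖
        ≤ ∫ y, (R ^ (-((d : ℝ) + α)) * R ^ (-((d : ℝ) + α))) * m (R⁻¹ • (x - y)) := by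
          refine norm_integral_le_of_norm_le (hi.const_mul _) (ae_of_all _ fun y => ?_)
          rw [habs]
          rcases le_or_gt ‖y‖ R with hy | hy
          · rw [hχ1 x hx, hχ1 y hy]
            have := hm0 (R⁻¹ • (x - y))
            simp only [sub_self, abs_zero, zero_mul]
            positivity
          · have hvy : |v y| ≤ R ^ (-((d : ℝ) + α)) :=
              ((hv y).trans (hwr y)).trans
                (Real.rpow_le_rpow_of_nonpos hR0 hy.le (by linarith))
            calc _ ≤ (R ^ (-((d : ℝ) + α)) * m (R⁻¹ • (x - y))) * R ^ (-((d : ℝ) + α)) :=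
                  mul_le_mul (h1 y) hvy (abs_nonneg _)
                    (mul_nonneg (by positivity) (hm0 _))
              _ = _ := by ring
      _ = R ^ (-((d : ℝ) + 2 * α)) * ∫ z, m z := by
          rw [integral_const_mul, he, ← mul_assoc, mul_assoc (R ^ _), hpow, ← Real.rpow_add hR0]
          congr 2; ring
      _ ≤ R ^ (-((d : ℝ) + 2 * α)) * (2 ^ ((d : ℝ) + α) * ((∫ z, m z) + ∫ z, w z)) := by
          gcongr
          nlinarith
      _ = _ := by ring
  · push Not at hx
    have hx0 : 0 < ‖x‖ := by linarith
    calc ‖∫ y, (χ x - χ y) * ‖x - y‖ ^ (-((d : ℝ) + α)) * v y‖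
        ≤ ∫ y, (2 ^ ((d : ℝ) + α) * ‖x‖ ^ (-((d : ℝ) + α))) *
            (R ^ (-((d : ℝ) + α)) * m (R⁻¹ • (x - y)) + w y) := by
          refine norm_integral_le_of_norm_le (((hi.const_mul _).add hw).const_mul _)
            (ae_of_all _ fun y => ?_)
          rw [habs]
          have hmy : 0 ≤ R ^ (-((d : ℝ) + α)) * m (R⁻¹ • (x - y)) :=
            mul_nonneg (by positivity) (hm0 _)
          have hwy := hw0 y
          rcases le_or_gt (‖x‖ / 2) ‖y‖ with hy | hy
          · have hvy : |v y| ≤ 2 ^ ((d : ℝ) + α) * ‖x‖ ^ (-((d : ℝ) + α)) :=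
              ((hv y).trans (hwr y)).trans (half_rpow hx0 hs hy)
            rw [mul_comm]
            refine mul_le_mul hvy ((h1 y).trans ?_) (by positivity) (by positivity)
            linarith
          · have hxy : ‖x‖ / 2 ≤ ‖x - y‖ := by
              have := norm_sub_norm_le x y
              linarith
            have hb := half_rpow hx0 hs hxy
            refine mul_le_mul ?_ ((hv y).trans ?_) (by positivity) (by positivity)
            · calc _ ≤ 1 * ‖x - y‖ ^ (-((d : ℝ) + α)) := by gcongr; exact hχd x y
                _ ≤ _ := by rw [one_mul]; exact hb
            · linarith
      _ = (2 ^ ((d : ℝ) + α) * ‖x‖ ^ (-((d : ℝ) + α))) *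
            (R ^ (-α) * (∫ z, m z) + ∫ z, w z) := by
          rw [integral_const_mul, integral_add (hi.const_mul _) hw, integral_const_mul, he,
            ← mul_assoc (R ^ _), hpow]
      _ ≤ (2 ^ ((d : ℝ) + α) * ‖x‖ ^ (-((d : ℝ) + α))) * (1 * (∫ z, m z) + ∫ z, w z) := by
          gcongr
          exact Real.rpow_le_one_of_one_le_of_nonpos hR (by linarith)
      _ = _ := by ring

end Aux

/-- Radial cut-off commutator bound for the regional fractional Laplacian, case `α < 1`:
if `|v(y)| ≤ (1 ∧ |y|^{-d-α})(1 ∧ y_d)^p` with `v` supported in the closed half-space,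
and `χ` is a radial cut-off at scale `R ≥ 1` with `|∇χ| ≤ C/R`, then
`|∫ (χ(x)-χ(y)) |x-y|^{-d-α} v(y) dy| ≤ C' (1_{|x|≤R} R^{-d-2α} + 1_{|x|>R} |x|^{-d-α})`
for all `x ∈ ℝ₊^d`, and consequently its `L²(ℝ₊^d)` norm is at most `C' R^{-α-d/2}`. -/
theorem stmt_19 (d : ℕ) (hd : 1 ≤ d) (α p C : ℝ) (hα1 : 0 < α) (hα2 : α < 1)
    (hp : 0 ≤ p) (hC : 0 < C) :
    ∃ C' : ℝ, 0 < C' ∧ ∀ R : ℝ, 1 ≤ R →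
      ∀ v χ : EuclideanSpace ℝ (Fin d) → ℝ,
        tsupport v ⊆ {y | 0 ≤ lastCoord d hd y} →
        (∀ y, 0 ≤ lastCoord d hd y →
          |v y| ≤ min 1 (‖y‖ ^ (-((d : ℝ) + α))) * (min 1 (lastCoord d hd y)) ^ p) →
        (∀ x, 0 ≤ χ x ∧ χ x ≤ 1) →
        (∀ x, ‖x‖ ≤ R → χ x = 1) →
        (∀ x, 2 * R ≤ ‖x‖ → χ x = 0) →
        Differentiable ℝ χ →
        (∀ x, ‖fderiv ℝ χ x‖ ≤ C / R) →
        (∀ x : EuclideanSpace ℝ (Fin d), 0 < lastCoord d hd x →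
          |∫ y : EuclideanSpace ℝ (Fin d),
              (χ x - χ y) * ‖x - y‖ ^ (-((d : ℝ) + α)) * v y|
            ≤ C' * (if ‖x‖ ≤ R then R ^ (-((d : ℝ) + 2 * α)) else ‖x‖ ^ (-((d : ℝ) + α))))
        ∧ Real.sqrt (∫ x in {x | 0 < lastCoord d hd x},
              (∫ y : EuclideanSpace ℝ (Fin d),
                (χ x - χ y) * ‖x - y‖ ^ (-((d : ℝ) + α)) * v y) ^ 2)
            ≤ C' * R ^ (-α - (d : ℝ) / 2) := by
  have hs : (d : ℝ) < (d : ℝ) + α := by linarith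
  have hw := Aux.w_integrable d _ hs
  have hm := Aux.m_integrable d hd α C hα1 hα2 hC
  have hd0 : (0 : ℝ) ≤ d := Nat.cast_nonneg d
  have hH := Aux.w_integrable d (2 * ((d : ℝ) + α)) (by linarith)
  set K := (2 : ℝ) ^ ((d : ℝ) + α) *
        ((∫ z : EuclideanSpace ℝ (Fin d), min 1 (C * ‖z‖) * ‖z‖ ^ (-((d : ℝ) + α))) +
          ∫ y : EuclideanSpace ℝ (Fin d), min 1 (‖y‖ ^ (-((d : ℝ) + α)))) with hK
  set H := ∫ y : EuclideanSpace ℝ (Fin d), min 1 (‖y‖ ^ (-(2 * ((d : ℝ) + α)))) with hHdef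
  have hK0 : 0 ≤ K := by
    rw [hK]
    refine mul_nonneg (by positivity) (add_nonneg (integral_nonneg fun z => ?_)
      (integral_nonneg fun z => ?_)) <;> simp only [Pi.zero_apply] <;> positivity
  have hH0 : 0 ≤ H := by
    rw [hHdef]
    refine integral_nonneg fun z => ?_
    simp only [Pi.zero_apply]; positivity
  refine ⟨K * (1 + Real.sqrt H) + 1, by positivity, ?_⟩
  intro R hR v χ hsupp hv hχ hχ1 hχ2 hdiff hgrad
  have hR0 : 0 < R := by linarith
  have hlip : ∀ x y, |χ x - χ y| ≤ C / R * ‖x - y‖ := fun x y => by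
    simpa using Convex.norm_image_sub_le_of_norm_fderiv_le (𝕜 := ℝ) (s := Set.univ) (f := χ)
      (fun z _ => hdiff z) (fun z _ => hgrad z) convex_univ (Set.mem_univ y) (Set.mem_univ x)
  have hv' : ∀ y, |v y| ≤ min 1 (‖y‖ ^ (-((d : ℝ) + α))) := by
    intro y
    by_cases hy : 0 ≤ lastCoord d hd y
    · refine (hv y hy).trans (mul_le_of_le_one_right (by positivity) ?_)
      exact Real.rpow_le_one (le_min zero_le_one hy) (min_le_left _ _) hp
    · have : v y = 0 := by
        by_contra h
        exact hy (hsupp (subset_tsupport v h))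
      rw [this, abs_zero]
      positivity
  have hpt := Aux.pointwise d α C hα1 hC hm hw R hR v χ hv' hχ hχ1 hlip
  rw [← hK] at hpt
  clear_value K
  have hsq := Real.sqrt_nonneg H
  refine ⟨fun x _ => (hpt x).trans ?_, ?_⟩
  · gcongr
    nlinarith
  · have hsc := Aux.scale d _ hH R hR0 0
    rw [← hHdef] at hsc
    obtain ⟨hi, he⟩ := hsc
    clear_value H
    set F : EuclideanSpace ℝ (Fin d) → ℝ := fun x => ∫ y : EuclideanSpace ℝ (Fin d),
                (χ x - χ y) * ‖x - y‖ ^ (-((d : ℝ) + α)) * v y with hF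
    set G : EuclideanSpace ℝ (Fin d) → ℝ := fun x => (K ^ 2 * R ^ (-(2 * ((d : ℝ) + α)))) *
        min 1 (‖R⁻¹ • (0 - x)‖ ^ (-(2 * ((d : ℝ) + α)))) with hG
    have hGi : Integrable G := hi.const_mul _
    have hG0 : ∀ x, 0 ≤ G x := fun x => by simp only [hG]; positivity
    have hFG : ∀ x, x ≠ 0 → F x ^ 2 ≤ G x := by
      intro x hx0
      have h1 : F x ^ 2 ≤ (K * (if ‖x‖ ≤ R then R ^ (-((d : ℝ) + 2 * α))
          else ‖x‖ ^ (-((d : ℝ) + α)))) ^ 2 := sq_le_sq' (abs_le.1 (hpt x)).1 (abs_le.1 (hpt x)).2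
      refine h1.trans ?_
      simp only [hG]
      rw [mul_pow, mul_assoc]
      refine mul_le_mul_of_nonneg_left ?_ (by positivity)
      have hn : ‖(0 : EuclideanSpace ℝ (Fin d)) - x‖ = ‖x‖ := by simp
      have hR2 : ∀ t u : ℝ, 0 ≤ t → (t ^ u) ^ 2 = t ^ (2 * u) := fun t u ht => by
        rw [mul_comm, Real.rpow_mul ht, ← Real.rpow_natCast]; norm_num
      split_ifs with hx
      · rw [hR2 _ _ hR0.le]
        have hx0' : 0 < ‖x‖ := norm_pos_iff.2 hx0
        rw [min_eq_left, mul_one]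
        · exact Real.rpow_le_rpow_of_exponent_le hR (by linarith)
        · refine Real.one_le_rpow_of_pos_of_le_one_of_nonpos ?_ ?_ (by linarith)
          · rw [norm_smul, hn, Real.norm_of_nonneg (by positivity)]; positivity
          · rw [norm_smul, hn, Real.norm_of_nonneg (by positivity), inv_mul_le_iff₀ hR0]; linarith
      · push Not at hx
        rw [hR2 _ _ (norm_nonneg _), min_eq_right, Aux.norm_scale R _ hR0, hn]
        · exact le_of_eq (by congr 1; ring)
        · refine Real.rpow_le_one_of_one_le_of_nonpos ?_ (by linarith)
          rw [norm_smul, hn, Real.norm_of_nonneg (by positivity), le_inv_mul_iff₀ hR0]; linarith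
    have : Nonempty (Fin d) := ⟨⟨0, hd⟩⟩
    have hne : ∀ᵐ x : EuclideanSpace ℝ (Fin d), x ≠ 0 := by
      filter_upwards [measure_eq_zero_iff_ae_notMem.1
        (measure_singleton (μ := volume) (0 : EuclideanSpace ℝ (Fin d)))] with x hx
      simpa using hx
    have hint : ∫ x in {x | 0 < lastCoord d hd x}, F x ^ 2 ≤
        (K * Real.sqrt H * R ^ (-α - (d : ℝ) / 2)) ^ 2 := by
      calc ∫ x in {x | 0 < lastCoord d hd x}, F x ^ 2
          ≤ ∫ x in {x | 0 < lastCoord d hd x}, G x :=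
            integral_mono_of_nonneg (ae_of_all _ fun x => sq_nonneg _) hGi.integrableOn
              (ae_restrict_of_ae (hne.mono hFG))
        _ ≤ ∫ x, G x := setIntegral_le_integral hGi (ae_of_all _ hG0)
        _ = K ^ 2 * H * (R ^ (-(2 * ((d : ℝ) + α))) * R ^ (d : ℝ)) := by
            simp only [hG]
            rw [integral_const_mul, he]; ring
        _ = _ := by
            rw [mul_pow, mul_pow, Real.sq_sqrt hH0, ← Real.rpow_add hR0, ← Real.rpow_natCast (R ^ _),
              ← Real.rpow_mul hR0.le]
            congr 2; push_cast; ring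
    calc Real.sqrt (∫ x in {x | 0 < lastCoord d hd x}, F x ^ 2)
        ≤ K * Real.sqrt H * R ^ (-α - (d : ℝ) / 2) := Real.sqrt_le_iff.2 ⟨by positivity, hint⟩
      _ ≤ _ := by
        gcongr
        nlinarith
end
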